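/- arXiv:0805.3437 — 2 statements merged into one kernel-verified Lean document; each statement's English description precedes it below -/
import Mathlib

section
/- Let M be a finite-dimensional (α,β)-Yetter-Drinfeld module and N a finite-dimensional (γ,δ)-Yetter-Drinfeld module. Then End(M) # End(N) ≅ End(^M N) # End(M) as algebras in _H𝒴𝒟^H, where ^M N := ^{(α,β)}N. -/
open TensorProduct

noncomputable section

namespace GYD

variable (k H : Type) [Field k] [Ring H] [HopfAlgebra k H]

/-- `φ` is a Hopf algebra automorphism of `H` (a linear equivalence which is both an
algebra morphism and a coalgebra morphism). -/
def IsHopfAut (φ : H ≃ₗ[k] H) : Prop :=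
  (∀ x y : H, φ (x * y) = φ x * φ y) ∧ (φ 1 = 1) ∧
  (∀ h : H, Coalgebra.comul (R := k) (φ h)
      = TensorProduct.map φ.toLinearMap φ.toLinearMap (Coalgebra.comul (R := k) h)) ∧
  (∀ h : H, Coalgebra.counit (R := k) (φ h) = Coalgebra.counit (R := k) h)

/-- `Sinv` is a two-sided inverse of the antipode of `H`. -/
def IsAntipodeInv (Sinv : H → H) : Prop :=
  (∀ h : H, HopfAlgebra.antipode (R := k) (Sinv h) = h) ∧
  (∀ h : H, Sinv (HopfAlgebra.antipode (R := k) h) = h)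

/-- The data `(act, coact)` makes `M` an `(α, β)`-Yetter-Drinfeld module over `H`:
`M` is a left `H`-module, a right `H`-comodule, and the compatibility
`(h·m)₍₀₎ ⊗ (h·m)₍₁₎ = h₂·m₍₀₎ ⊗ β(h₃) m₍₁₎ α(Sinv(h₁))` holds (expressed via
arbitrary finite representations of `(Δ ⊗ id)(Δ h)` and of `coact m`). -/
def IsYD (Sinv α β : H → H) {M : Type} [AddCommGroup M] [Module k M]
    (act : H →ₗ[k] M →ₗ[k] M) (coact : M →ₗ[k] M ⊗[k] H) : Prop :=
  (∀ m : M, act 1 m = m) ∧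
  (∀ (g h : H) (m : M), act (g * h) m = act g (act h m)) ∧
  (∀ m : M, LinearMap.rTensor H coact (coact m)
      = (TensorProduct.assoc k M H H).symm
          (LinearMap.lTensor M (Coalgebra.comul (R := k)) (coact m))) ∧
  (∀ m : M,
    TensorProduct.rid k M (LinearMap.lTensor M (Coalgebra.counit (R := k)) (coact m)) = m) ∧
  (∀ (h : H) (m : M) (s t : Finset ℕ) (a b c : ℕ → H) (m₀ : ℕ → M) (m₁ : ℕ → H),
    LinearMap.rTensor H (Coalgebra.comul (R := k)) (Coalgebra.comul (R := k) h)
        = ∑ i ∈ s, (a i ⊗ₜ[k] b i) ⊗ₜ[k] c i →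
    coact m = ∑ j ∈ t, m₀ j ⊗ₜ[k] m₁ j →
    coact (act h m) = ∑ i ∈ s, ∑ j ∈ t,
      act (b i) (m₀ j) ⊗ₜ[k] (β (c i) * m₁ j * α (Sinv (a i))))

/-- Characterization of the action `h · (m ⊗ n) = θ₁(h₁)·m ⊗ θ₂(h₂)·n` on `M ⊗ N`. -/
def TensorActChar (θ₁ θ₂ : H → H) {M N : Type} [AddCommGroup M] [Module k M]
    [AddCommGroup N] [Module k N]
    (actM : H →ₗ[k] M →ₗ[k] M) (actN : H →ₗ[k] N →ₗ[k] N)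
    (act : H →ₗ[k] (M ⊗[k] N) →ₗ[k] (M ⊗[k] N)) : Prop :=
  ∀ (h : H) (m : M) (n : N) (s : Finset ℕ) (p q : ℕ → H),
    Coalgebra.comul (R := k) h = ∑ i ∈ s, p i ⊗ₜ[k] q i →
    act h (m ⊗ₜ[k] n) = ∑ i ∈ s, actM (θ₁ (p i)) m ⊗ₜ[k] actN (θ₂ (q i)) n

/-- Characterization of the "type two" action `h · (m ⊗ n) = h₂·m ⊗ h₁·n` on `M ⊗ N`. -/
def TensorActCharTwo {M N : Type} [AddCommGroup M] [Module k M]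
    [AddCommGroup N] [Module k N]
    (actM : H →ₗ[k] M →ₗ[k] M) (actN : H →ₗ[k] N →ₗ[k] N)
    (act : H →ₗ[k] (M ⊗[k] N) →ₗ[k] (M ⊗[k] N)) : Prop :=
  ∀ (h : H) (m : M) (n : N) (s : Finset ℕ) (p q : ℕ → H),
    Coalgebra.comul (R := k) h = ∑ i ∈ s, p i ⊗ₜ[k] q i →
    act h (m ⊗ₜ[k] n) = ∑ i ∈ s, actM (q i) m ⊗ₜ[k] actN (p i) n

/-- Characterization of the coaction `m ⊗ n ↦ (m₍₀₎ ⊗ n₍₀₎) ⊗ n₍₁₎ m₍₁₎` on `M ⊗ N`. -/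
def TensorCoactChar {M N : Type} [AddCommGroup M] [Module k M]
    [AddCommGroup N] [Module k N]
    (coactM : M →ₗ[k] M ⊗[k] H) (coactN : N →ₗ[k] N ⊗[k] H)
    (coact : M ⊗[k] N →ₗ[k] (M ⊗[k] N) ⊗[k] H) : Prop :=
  ∀ (m : M) (n : N) (s t : Finset ℕ) (m₀ : ℕ → M) (m₁ : ℕ → H) (n₀ : ℕ → N) (n₁ : ℕ → H),
    coactM m = ∑ i ∈ s, m₀ i ⊗ₜ[k] m₁ i →
    coactN n = ∑ j ∈ t, n₀ j ⊗ₜ[k] n₁ j →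
    coact (m ⊗ₜ[k] n) = ∑ i ∈ s, ∑ j ∈ t, (m₀ i ⊗ₜ[k] n₀ j) ⊗ₜ[k] (n₁ j * m₁ i)

/-- Characterization of the "type two" coaction `m ⊗ n ↦ (m₍₀₎ ⊗ n₍₀₎) ⊗ m₍₁₎ n₍₁₎`. -/
def TensorCoactCharTwo {M N : Type} [AddCommGroup M] [Module k M]
    [AddCommGroup N] [Module k N]
    (coactM : M →ₗ[k] M ⊗[k] H) (coactN : N →ₗ[k] N ⊗[k] H)
    (coact : M ⊗[k] N →ₗ[k] (M ⊗[k] N) ⊗[k] H) : Prop :=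
  ∀ (m : M) (n : N) (s t : Finset ℕ) (m₀ : ℕ → M) (m₁ : ℕ → H) (n₀ : ℕ → N) (n₁ : ℕ → H),
    coactM m = ∑ i ∈ s, m₀ i ⊗ₜ[k] m₁ i →
    coactN n = ∑ j ∈ t, n₀ j ⊗ₜ[k] n₁ j →
    coact (m ⊗ₜ[k] n) = ∑ i ∈ s, ∑ j ∈ t, (m₀ i ⊗ₜ[k] n₀ j) ⊗ₜ[k] (m₁ i * n₁ j)

/-- Characterization of the action `(h · f)(m) = f (θ(h) · m)` on the dual space. -/
def DualActChar (θ : H → H) {M : Type} [AddCommGroup M] [Module k M]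
    (actM : H →ₗ[k] M →ₗ[k] M)
    (actD : H →ₗ[k] Module.Dual k M →ₗ[k] Module.Dual k M) : Prop :=
  ∀ (h : H) (f : Module.Dual k M) (m : M), actD h f m = f (actM (θ h) m)

/-- Characterization of the coaction `f₍₀₎(m) ⊗ f₍₁₎ = f(m₍₀₎) ⊗ σ(m₍₁₎)` on the dual space
(expressed through contraction against evaluation at each `m`). -/
def DualCoactChar (σ : H → H) {M : Type} [AddCommGroup M] [Module k M]
    (coactM : M →ₗ[k] M ⊗[k] H)
    (coactD : Module.Dual k M →ₗ[k] Module.Dual k M ⊗[k] H) : Prop :=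
  ∀ (f : Module.Dual k M) (m : M) (t : Finset ℕ) (m₀ : ℕ → M) (m₁ : ℕ → H),
    coactM m = ∑ j ∈ t, m₀ j ⊗ₜ[k] m₁ j →
    TensorProduct.lid k H (LinearMap.rTensor H (Module.Dual.eval k M m) (coactD f))
      = ∑ j ∈ t, f (m₀ j) • σ (m₁ j)

/-- Characterization of the action `(h · u)(m) = θ(h₁) · u (θ(S(h₂)) · m)` on `End(M)`. -/
def EndActChar (θ : H → H) {M : Type} [AddCommGroup M] [Module k M]
    (actM : H →ₗ[k] M →ₗ[k] M)
    (actE : H →ₗ[k] Module.End k M →ₗ[k] Module.End k M) : Prop :=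
  ∀ (h : H) (u : Module.End k M) (m : M) (s : Finset ℕ) (p q : ℕ → H),
    Coalgebra.comul (R := k) h = ∑ i ∈ s, p i ⊗ₜ[k] q i →
    actE h u m = ∑ i ∈ s,
      actM (θ (p i)) (u (actM (θ (HopfAlgebra.antipode (R := k) (q i))) m))

/-- Characterization of the coaction `u₍₀₎(m) ⊗ u₍₁₎ = u(m₍₀₎)₍₀₎ ⊗ Sinv(m₍₁₎) u(m₍₀₎)₍₁₎`
on `End(M)`, expressed through contraction against evaluation at each `m`. -/
def EndCoactChar (Sinv : H → H) {M : Type} [AddCommGroup M] [Module k M]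
    (coactM : M →ₗ[k] M ⊗[k] H)
    (coactE : Module.End k M →ₗ[k] Module.End k M ⊗[k] H) : Prop :=
  ∀ (u : Module.End k M) (m : M) (t : Finset ℕ) (m₀ : ℕ → M) (m₁ : ℕ → H)
    (r : ℕ → Finset ℕ) (n₀ : ℕ → ℕ → M) (n₁ : ℕ → ℕ → H),
    coactM m = ∑ j ∈ t, m₀ j ⊗ₜ[k] m₁ j →
    (∀ j ∈ t, coactM (u (m₀ j)) = ∑ l ∈ r j, n₀ j l ⊗ₜ[k] n₁ j l) →
    LinearMap.rTensor H (LinearMap.applyₗ (R := k) m) (coactE u)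
      = ∑ j ∈ t, ∑ l ∈ r j, n₀ j l ⊗ₜ[k] (Sinv (m₁ j) * n₁ j l)

/-- Characterization of the action `(h · u)(m) = θ(h₂) · u (θ(Sinv(h₁)) · m)` on `End(M)ᵒᵖ`. -/
def EndOpActChar (θ Sinv : H → H) {M : Type} [AddCommGroup M] [Module k M]
    (actM : H →ₗ[k] M →ₗ[k] M)
    (actE : H →ₗ[k] (Module.End k M)ᵐᵒᵖ →ₗ[k] (Module.End k M)ᵐᵒᵖ) : Prop :=
  ∀ (h : H) (u : (Module.End k M)ᵐᵒᵖ) (m : M) (s : Finset ℕ) (p q : ℕ → H),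
    Coalgebra.comul (R := k) h = ∑ i ∈ s, p i ⊗ₜ[k] q i →
    (actE h u).unop m = ∑ i ∈ s,
      actM (θ (q i)) (u.unop (actM (θ (Sinv (p i))) m))

/-- Characterization of the coaction `u₍₀₎(m) ⊗ u₍₁₎ = u(m₍₀₎)₍₀₎ ⊗ u(m₍₀₎)₍₁₎ S(m₍₁₎)`
on `End(M)ᵒᵖ`, expressed through contraction against evaluation at each `m`. -/
def EndOpCoactChar {M : Type} [AddCommGroup M] [Module k M]
    (coactM : M →ₗ[k] M ⊗[k] H)
    (coactE : (Module.End k M)ᵐᵒᵖ →ₗ[k] (Module.End k M)ᵐᵒᵖ ⊗[k] H) : Prop :=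
  ∀ (u : (Module.End k M)ᵐᵒᵖ) (m : M) (t : Finset ℕ) (m₀ : ℕ → M) (m₁ : ℕ → H)
    (r : ℕ → Finset ℕ) (n₀ : ℕ → ℕ → M) (n₁ : ℕ → ℕ → H),
    coactM m = ∑ j ∈ t, m₀ j ⊗ₜ[k] m₁ j →
    (∀ j ∈ t, coactM (u.unop (m₀ j)) = ∑ l ∈ r j, n₀ j l ⊗ₜ[k] n₁ j l) →
    LinearMap.rTensor H ((LinearMap.applyₗ (R := k) m).comp
        (MulOpposite.opLinearEquiv k).symm.toLinearMap) (coactE u)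
      = ∑ j ∈ t, ∑ l ∈ r j,
          n₀ j l ⊗ₜ[k] (n₁ j l * HopfAlgebra.antipode (R := k) (m₁ j))

/-- `A`, with the Yetter-Drinfeld structure `(act, coact)`, is an algebra in the braided
category of Yetter-Drinfeld modules over `H`. -/
def IsYDAlgebra (Sinv : H → H) {A : Type} [Ring A] [Algebra k A]
    (act : H →ₗ[k] A →ₗ[k] A) (coact : A →ₗ[k] A ⊗[k] H) : Prop :=
  IsYD k H Sinv id id act coact ∧
  (∀ (h : H) (a b : A) (s : Finset ℕ) (p q : ℕ → H),
    Coalgebra.comul (R := k) h = ∑ i ∈ s, p i ⊗ₜ[k] q i →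
    act h (a * b) = ∑ i ∈ s, act (p i) a * act (q i) b) ∧
  (∀ h : H, act h 1 = Coalgebra.counit (R := k) h • (1 : A)) ∧
  (coact 1 = (1 : A) ⊗ₜ[k] (1 : H)) ∧
  (∀ (a b : A) (s t : Finset ℕ) (a₀ : ℕ → A) (a₁ : ℕ → H) (b₀ : ℕ → A) (b₁ : ℕ → H),
    coact a = ∑ i ∈ s, a₀ i ⊗ₜ[k] a₁ i →
    coact b = ∑ j ∈ t, b₀ j ⊗ₜ[k] b₁ j →
    coact (a * b) = ∑ i ∈ s, ∑ j ∈ t, (a₀ i * b₀ j) ⊗ₜ[k] (b₁ j * a₁ i))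

/-- Characterization of the smash product multiplication
`(a # b)(a' # b') = a a'₍₀₎ # (a'₍₁₎ · b) b'` on `A ⊗ B`. -/
def SmashMulChar {A B : Type} [Ring A] [Algebra k A] [Ring B] [Algebra k B]
    (actB : H →ₗ[k] B →ₗ[k] B) (coactA : A →ₗ[k] A ⊗[k] H)
    (mul : (A ⊗[k] B) →ₗ[k] (A ⊗[k] B) →ₗ[k] (A ⊗[k] B)) : Prop :=
  ∀ (a a' : A) (b b' : B) (t : Finset ℕ) (a₀ : ℕ → A) (a₁ : ℕ → H),
    coactA a' = ∑ j ∈ t, a₀ j ⊗ₜ[k] a₁ j →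
    mul (a ⊗ₜ[k] b) (a' ⊗ₜ[k] b') = ∑ j ∈ t, (a * a₀ j) ⊗ₜ[k] (actB (a₁ j) b * b')

end GYD

namespace GYDP
open WithConv Coalgebra

variable {k H E F B : Type} [Field k] [Ring H] [HopfAlgebra k H]
  [Ring E] [Algebra k E] [Ring F] [Algebra k F] [Ring B] [Algebra k B]

/-- the constant element of the convolution algebra -/
def cst (b : B) : WithConv (H →ₗ[k] B) :=
  toConv (LinearMap.toSpanSingleton k B b ∘ₗ counit)

lemma cst_mul_apply (b : B) (f : WithConv (H →ₗ[k] B)) (h : H) :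
    ((cst b : WithConv (H →ₗ[k] B)) * f).ofConv h = b * f.ofConv h := by
  have := Coalgebra.sum_counit_smul (ℛ k h)
  conv_rhs => rw [← this]
  refine ((ℛ k h).convMul_apply _ _).trans ?_
  simp [cst, Finset.mul_sum]

lemma mul_cst_apply (b : B) (f : WithConv (H →ₗ[k] B)) (h : H) :
    (f * (cst b : WithConv (H →ₗ[k] B))).ofConv h = f.ofConv h * b := by
  have h2 : ∑ x ∈ (ℛ k h).index, counit (R := k) ((ℛ k h).right x) • (ℛ k h).left x = h := by
    have := congrArg (TensorProduct.rid k H) (Coalgebra.sum_tmul_counit_eq (ℛ k h))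
    simpa only [map_sum, TensorProduct.rid_tmul, one_smul] using this
  conv_rhs => rw [← h2]
  refine ((ℛ k h).convMul_apply _ _).trans ?_
  simp [cst, Finset.sum_mul]

lemma cst_mul (b : B) (f : H →ₗ[k] B) :
    (cst b : WithConv (H →ₗ[k] B)) * toConv f = toConv (LinearMap.mulLeft k b ∘ₗ f) := by
  ext h; exact cst_mul_apply b _ h

lemma mul_cst (b : B) (f : H →ₗ[k] B) :
    toConv f * (cst b : WithConv (H →ₗ[k] B)) = toConv (LinearMap.mulRight k b ∘ₗ f) := by
  ext h; exact mul_cst_apply b _ h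

lemma cst_mul_cst (a b : B) :
    (cst a : WithConv (H →ₗ[k] B)) * cst b = cst (a * b) := by
  ext h; refine (cst_mul_apply _ _ _).trans ?_; simp [cst]

lemma cst_one : (cst 1 : WithConv (H →ₗ[k] B)) = 1 := by
  ext h; simp [cst, Algebra.algebraMap_eq_smul_one, LinearMap.convOne_def]

lemma cst_comm (b : B) (f : WithConv (H →ₗ[k] B)) (hc : ∀ h, b * f.ofConv h = f.ofConv h * b) :
    (cst b : WithConv (H →ₗ[k] B)) * f = f * cst b := by
  ext h
  exact (cst_mul_apply _ _ _).trans ((hc h).trans (mul_cst_apply _ _ _).symm)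

lemma cst_inj (b : B) (b' : B) (h : (cst b : WithConv (H →ₗ[k] B)) = cst b') : b = b' := by
  have := congrArg (fun f => f.ofConv 1) h
  simpa [cst] using this

/-- convolution inverse -/
lemma conv_antipode (f : H →ₐ[k] B) :
    toConv f.toLinearMap * toConv (f.toLinearMap ∘ₗ HopfAlgebra.antipode k) = 1 := by
  ext h
  have := congrArg f (HopfAlgebra.sum_mul_antipode_eq_algebraMap_counit (ℛ k h))
  refine ((ℛ k h).convMul_apply _ _).trans ?_
  simpa using this

lemma antipode_conv (f : H →ₐ[k] B) :
    toConv (f.toLinearMap ∘ₗ HopfAlgebra.antipode k) * toConv f.toLinearMap = 1 := by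
  ext h
  have := congrArg f (HopfAlgebra.sum_antipode_mul_eq_algebraMap_counit (ℛ k h))
  refine ((ℛ k h).convMul_apply _ _).trans ?_
  simpa using this

/-- contraction of `E ⊗ H` into `B` -/
def ev (iE : E →ₐ[k] B) (f : H →ₗ[k] B) : E ⊗[k] H →ₗ[k] B :=
  LinearMap.mul' k B ∘ₗ TensorProduct.map iE.toLinearMap f

@[simp] lemma ev_tmul (iE : E →ₐ[k] B) (f : H →ₗ[k] B) (e : E) (x : H) :
    ev iE f (e ⊗ₜ x) = iE e * f x := rfl

lemma ev_mulRight (iE : E →ₐ[k] B) (f : H →ₗ[k] B) (b : B) (C : E ⊗[k] H) :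
    ev iE (LinearMap.mulRight k b ∘ₗ f) C = ev iE f C * b := by
  induction C with
  | zero => simp
  | tmul e x => simp [mul_assoc]
  | add x y hx hy => simp only [map_add, hx, hy, add_mul]

lemma ev_mulLeft (iE : E →ₐ[k] B) (f : H →ₗ[k] B) (b : B) (hb : ∀ e, b * iE e = iE e * b)
    (C : E ⊗[k] H) :
    ev iE (LinearMap.mulLeft k b ∘ₗ f) C = b * ev iE f C := by
  induction C with
  | zero => simp
  | tmul e x => simp [← mul_assoc, hb]
  | add x y hx hy => simp only [map_add, hx, hy, mul_add]

lemma ev_comm (iE : E →ₐ[k] B) (f : H →ₗ[k] B) (b : B) (hb : ∀ e, b * iE e = iE e * b)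
    (hf : ∀ x, b * f x = f x * b) (C : E ⊗[k] H) : b * ev iE f C = ev iE f C * b := by
  induction C with
  | zero => simp
  | tmul e x => simp only [ev_tmul]; rw [← mul_assoc, hb, mul_assoc, hf, mul_assoc]
  | add x y hx hy => simp only [map_add, hx, hy, mul_add, add_mul]

/-- the multiplication `(c ⊗ x)(c' ⊗ x') = c c' ⊗ (x ⊗ x')` -/
def mm (C C' : E ⊗[k] H) : E ⊗[k] (H ⊗[k] H) :=
  TensorProduct.map (LinearMap.mul' k E) LinearMap.id
    (TensorProduct.tensorTensorTensorComm k E H E H (C ⊗ₜ C'))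

/-- a comodule structure as an element -/
structure IsCoel (C : E ⊗[k] H) : Prop where
  comul : LinearMap.lTensor E (Coalgebra.comul (R := k)) C = mm C C
  counit : LinearMap.lTensor E (Coalgebra.counit (R := k)) C = 1 ⊗ₜ 1

lemma ev_two (iE : E →ₐ[k] B) (f g : H →ₗ[k] B) (hf : ∀ x e, f x * iE e = iE e * f x)
    (X Y : E ⊗[k] H) :
    LinearMap.mul' k B (TensorProduct.map iE.toLinearMap
      (LinearMap.mul' k B ∘ₗ TensorProduct.map f g) (mm X Y)) = ev iE f X * ev iE g Y := by
  unfold mm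
  induction X with
  | zero => simp
  | add x y hx hy => simp only [map_add, add_mul, TensorProduct.add_tmul, hx, hy]
  | tmul e x =>
    induction Y with
    | zero => simp
    | add x y hx hy => simp only [map_add, mul_add, TensorProduct.tmul_add, hx, hy]
    | tmul e' x' =>
      simp only [tensorTensorTensorComm_tmul, map_tmul, LinearMap.mul'_apply, LinearMap.id_apply,
        AlgHom.toLinearMap_apply, map_mul, LinearMap.comp_apply, ev_tmul]
      rw [mul_assoc, mul_assoc, ← mul_assoc (f x), hf, mul_assoc]

lemma ev_conv {C : E ⊗[k] H} (hC : IsCoel C) (iE : E →ₐ[k] B) (f g : H →ₗ[k] B)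
    (hf : ∀ x e, f x * iE e = iE e * f x) :
    ev iE (toConv f * toConv g).ofConv C = ev iE f C * ev iE g C := by
  rw [← ev_two iE f g hf, ← hC.comul]
  unfold ev
  rw [LinearMap.convMul_def]
  simp only [LinearMap.comp_apply]
  congr 1
  rw [← LinearMap.comp_apply (TensorProduct.map _ _), LinearMap.map_comp_lTensor]
  rfl

lemma ev_one {C : E ⊗[k] H} (hC : IsCoel C) (iE : E →ₐ[k] B) :
    ev iE (1 : WithConv (H →ₗ[k] B)).ofConv C = 1 := by
  have := congrArg (LinearMap.mul' k B ∘ₗ TensorProduct.map iE.toLinearMap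
    (Algebra.linearMap k B)) hC.counit
  rw [LinearMap.comp_apply, ← LinearMap.comp_apply (TensorProduct.map _ _),
    LinearMap.map_comp_lTensor] at this
  simpa [ev, LinearMap.convOne_def] using this

end GYDP

namespace GYDP
open WithConv Coalgebra

variable {k H E F B : Type} [Field k] [Ring H] [HopfAlgebra k H]
  [Ring E] [Algebra k E] [Ring F] [Algebra k F] [Ring B] [Algebra k B]

/-- the anti-homomorphism `H → B` attached to a homomorphism from the opposite algebra -/
def hl (iH : Hᵐᵒᵖ →ₐ[k] B) : H →ₗ[k] B :=
  iH.toLinearMap ∘ₗ (MulOpposite.opLinearEquiv k).toLinearMap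

lemma hl_apply (iH : Hᵐᵒᵖ →ₐ[k] B) (x : H) : hl iH x = iH (MulOpposite.op x) := rfl

lemma hl_mul (iH : Hᵐᵒᵖ →ₐ[k] B) (x y : H) : hl iH (x * y) = hl iH y * hl iH x := by
  simp [hl_apply]

/-- the normalized Yetter-Drinfeld condition -/
def YDT (C : E ⊗[k] H) (r : H →ₐ[k] E) (b : H →ₗ[k] H) : Prop :=
  ∀ h : H, C * TensorProduct.map r.toLinearMap LinearMap.id
      (TensorProduct.comm k H H (Coalgebra.comul (R := k) h)) =
    TensorProduct.map r.toLinearMap b (Coalgebra.comul (R := k) h) * C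

lemma ev_eq_lift (iE : E →ₐ[k] B) (f : H →ₐ[k] B) (hc : ∀ e x, Commute (iE e) (f x))
    (X : E ⊗[k] H) : ev iE f.toLinearMap X = Algebra.TensorProduct.lift iE f hc X := by
  induction X with
  | zero => simp
  | tmul e x => simp
  | add x y hx hy => simp only [map_add, hx, hy]

lemma ydt_alg {C : E ⊗[k] H} {r : H →ₐ[k] E} {b : H →ₗ[k] H} (h : YDT C r b)
    (iE : E →ₐ[k] B) (f : H →ₐ[k] B) (hc : ∀ e x, Commute (iE e) (f x)) :
    (cst (ev iE f.toLinearMap C) : WithConv (H →ₗ[k] B)) *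
        (toConv f.toLinearMap * toConv (iE.toLinearMap ∘ₗ r.toLinearMap)) =
      (toConv (iE.toLinearMap ∘ₗ r.toLinearMap) * toConv (f.toLinearMap ∘ₗ b)) *
        cst (ev iE f.toLinearMap C) := by
  ext x
  refine (cst_mul_apply _ _ _).trans (Eq.trans ?_ (mul_cst_apply _ _ _).symm)
  have := congrArg (Algebra.TensorProduct.lift iE f hc) (h x)
  rw [map_mul, map_mul] at this
  rw [ev_eq_lift iE f hc]
  convert this using 2
  · rw [LinearMap.convMul_def]
    simp only [LinearMap.comp_apply]
    generalize (Coalgebra.comul (R := k) x) = t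
    induction t with
    | zero => simp
    | tmul p q => simpa using (hc _ _).symm.eq
    | add x y hx hy => simp only [map_add, hx, hy]
  · rw [LinearMap.convMul_def]
    simp only [LinearMap.comp_apply]
    generalize (Coalgebra.comul (R := k) x) = t
    induction t with
    | zero => simp
    | tmul p q => simp
    | add x y hx hy => simp only [map_add, hx, hy]

lemma ev_hl_mul_right (iE : E →ₐ[k] B) (iH : Hᵐᵒᵖ →ₐ[k] B)
    (hc : ∀ e x, Commute (iE e) (iH x)) (X : E ⊗[k] H) (e : E) (p : H) :
    ev iE (hl iH) (X * (e ⊗ₜ p)) = hl iH p * ev iE (hl iH) X * iE e := by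
  induction X with
  | zero => simp
  | add x y hx hy => simp only [map_add, hx, hy, mul_add, add_mul]
  | tmul c x =>
    have h1 := (hc e (MulOpposite.op x)).eq
    have h2 := (hc c (MulOpposite.op p)).eq
    simp only [Algebra.TensorProduct.tmul_mul_tmul, ev_tmul, map_mul, hl_mul]
    simp only [hl_apply] at *
    rw [mul_assoc (iE c), ← mul_assoc (iE e), (hc e (MulOpposite.op p)).eq]
    rw [mul_assoc (iH _), h1]
    simp only [← mul_assoc]
    rw [h2]

lemma ev_hl_mul_left (iE : E →ₐ[k] B) (iH : Hᵐᵒᵖ →ₐ[k] B)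
    (X : E ⊗[k] H) (e : E) (p : H) :
    ev iE (hl iH) ((e ⊗ₜ p) * X) = iE e * ev iE (hl iH) X * hl iH p := by
  induction X with
  | zero => simp
  | add x y hx hy => simp only [map_add, hx, hy, mul_add, add_mul]
  | tmul c x =>
    simp only [Algebra.TensorProduct.tmul_mul_tmul, ev_tmul, map_mul, hl_mul, mul_assoc]

lemma ev_conv_right (iE : E →ₐ[k] B) (iH : Hᵐᵒᵖ →ₐ[k] B)
    (hc : ∀ e x, Commute (iE e) (iH x)) (C : E ⊗[k] H) (r : H →ₐ[k] E) (x : H) :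
    (toConv (hl iH) * cst (ev iE (hl iH) C) * toConv (iE.toLinearMap ∘ₗ r.toLinearMap)).ofConv x
    = ev iE (hl iH) (C * TensorProduct.map r.toLinearMap LinearMap.id
      (TensorProduct.comm k H H (Coalgebra.comul (R := k) x))) := by
  rw [mul_cst, LinearMap.convMul_def]
  simp only [LinearMap.comp_apply]
  generalize (Coalgebra.comul (R := k) x) = t
  induction t with
  | zero => simp
  | tmul p q => simp [ev_hl_mul_right iE iH hc]
  | add x y hx hy => simp only [map_add, hx, hy, mul_add]

lemma ev_conv_left (iE : E →ₐ[k] B) (iH : Hᵐᵒᵖ →ₐ[k] B)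
    (C : E ⊗[k] H) (r : H →ₐ[k] E) (b : H →ₗ[k] H) (x : H) :
    (toConv (iE.toLinearMap ∘ₗ r.toLinearMap) * cst (ev iE (hl iH) C) *
      toConv (hl iH ∘ₗ b)).ofConv x
    = ev iE (hl iH) (TensorProduct.map r.toLinearMap b (Coalgebra.comul (R := k) x) * C) := by
  rw [mul_cst, LinearMap.convMul_def]
  simp only [LinearMap.comp_apply]
  generalize (Coalgebra.comul (R := k) x) = t
  induction t with
  | zero => simp
  | tmul p q => simp [ev_hl_mul_left iE iH]
  | add x y hx hy => simp only [map_add, hx, hy, add_mul]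

lemma ydt_op {C : E ⊗[k] H} {r : H →ₐ[k] E} {b : H →ₗ[k] H} (h : YDT C r b)
    (iE : E →ₐ[k] B) (iH : Hᵐᵒᵖ →ₐ[k] B) (hc : ∀ e x, Commute (iE e) (iH x)) :
    toConv (hl iH) * cst (ev iE (hl iH) C) * toConv (iE.toLinearMap ∘ₗ r.toLinearMap) =
    toConv (iE.toLinearMap ∘ₗ r.toLinearMap) * cst (ev iE (hl iH) C) * toConv (hl iH ∘ₗ b) := by
  ext x
  exact (ev_conv_right iE iH hc C r x).trans
    ((congrArg _ (h x)).trans (ev_conv_left iE iH C r b x).symm)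

lemma ev_push {B' : Type} [Ring B'] [Algebra k B'] (p : B →ₐ[k] B') (iE : E →ₐ[k] B)
    (f : H →ₗ[k] B) (X : E ⊗[k] H) :
    p (ev iE f X) = ev (p.comp iE) (p.toLinearMap ∘ₗ f) X := by
  induction X with
  | zero => simp
  | tmul e x => simp
  | add x y hx hy => simp only [map_add, hx, hy]

lemma ev_cst {C : E ⊗[k] H} (hC : IsCoel C) (iE : E →ₐ[k] B) (b : B) :
    ev iE (cst b : WithConv (H →ₗ[k] B)).ofConv C = b := by
  have : (cst b : WithConv (H →ₗ[k] B)) =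
      toConv (LinearMap.mulRight k b ∘ₗ (1 : WithConv (H →ₗ[k] B)).ofConv) := by
    rw [← mul_cst]; simp
  rw [this]
  have h := ev_mulRight iE (1 : WithConv (H →ₗ[k] B)).ofConv b C
  rw [ev_one hC, one_mul] at h
  exact h

/-- Yang-Baxter type relation -/
lemma yb {C : E ⊗[k] H} (hC : IsCoel C) {D : F ⊗[k] H} {s : H →ₐ[k] F} {d : H →ₗ[k] H}
    (hD : YDT D s d) (iE : E →ₐ[k] B) (iF : F →ₐ[k] B) (iH : Hᵐᵒᵖ →ₐ[k] B)
    (hEF : ∀ e x, Commute (iE e) (iF x)) (hEH : ∀ e x, Commute (iE e) (iH x))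
    (hFH : ∀ e x, Commute (iF e) (iH x)) :
    ev iE (hl iH) C * ev iF (hl iH) D * ev iE (iF.comp s).toLinearMap C =
    ev iE (iF.comp s).toLinearMap C * ev iF (hl iH) D * ev iE (hl iH ∘ₗ d) C := by
  have h := ydt_op hD iF iH hFH
  have hDE : ∀ e, ev iF (hl iH) D * iE e = iE e * ev iF (hl iH) D := fun e =>
    (ev_comm iF (hl iH) (iE e) (fun f => (hEF e f).eq) (fun f => (hEH e _).eq) D).symm
  have h2 := congrArg (fun f => ev iE f.ofConv C) h
  rw [mul_cst, mul_cst, ev_conv hC, ev_conv hC, ev_mulRight, ev_mulRight] at h2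
  · exact h2
  · intro x e
    simp only [LinearMap.comp_apply, LinearMap.mulRight_apply, AlgHom.toLinearMap_apply]
    rw [mul_assoc, hDE, ← mul_assoc, (hEF _ _).symm.eq, mul_assoc]
  · intro x e
    simp only [LinearMap.comp_apply, LinearMap.mulRight_apply, hl_apply]
    rw [mul_assoc, hDE, ← mul_assoc, (hEH _ _).symm.eq, mul_assoc]

/-- the action on `End` -/
def ActRel (s : H →ₐ[k] F) (act : H →ₗ[k] F →ₗ[k] F) : Prop :=
  ∀ h v, act h v = LinearMap.mul' k F (TensorProduct.map (LinearMap.mulRight k v ∘ₗ s.toLinearMap)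
    (s.toLinearMap ∘ₗ HopfAlgebra.antipode k) (Coalgebra.comul (R := k) h))

lemma ActRel.conv {s : H →ₐ[k] F} {act : H →ₗ[k] F →ₗ[k] F} (ha : ActRel s act)
    (iF : F →ₐ[k] B) (v : F) : toConv (iF.toLinearMap ∘ₗ act.flip v) =
      toConv (iF.comp s).toLinearMap * cst (iF v) *
        toConv ((iF.comp s).toLinearMap ∘ₗ HopfAlgebra.antipode k) := by
  ext x
  rw [mul_cst, LinearMap.convMul_def]
  simp only [LinearMap.comp_apply, LinearMap.flip_apply, ha x v]
  generalize (Coalgebra.comul (R := k) x) = t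
  induction t with
  | zero => simp
  | tmul p q => simp
  | add x y hx hy => simp only [map_add, hx, hy]

lemma ActRel.mul {s : H →ₐ[k] F} {act : H →ₗ[k] F →ₗ[k] F} (ha : ActRel s act)
    (x y : H) (v : F) : act (x * y) v = act x (act y v) := by
  rw [ha, ha, ha, Bialgebra.comul_mul]
  generalize (Coalgebra.comul (R := k) x) = t
  generalize (Coalgebra.comul (R := k) y) = t'
  induction t with
  | zero => simp
  | add x y hx hy => simp only [map_add, hx, hy, add_mul]
  | tmul p q =>
    induction t' with
    | zero => simp
    | add x y hx hy =>
      simp only [map_add, hx, hy, mul_add]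
      simp [mul_add, add_mul]
    | tmul p' q' => simp [HopfAlgebra.antipode_mul_antidistrib, mul_assoc]

lemma ActRel.one {s : H →ₐ[k] F} {act : H →ₗ[k] F →ₗ[k] F} (ha : ActRel s act)
    (v : F) : act 1 v = v := by
  rw [ha]; simp [Algebra.TensorProduct.one_def]

lemma ev_sS {C : E ⊗[k] H} (hC : IsCoel C) (iE : E →ₐ[k] B) (f : H →ₐ[k] B)
    (hc : ∀ e x, Commute (iE e) (f x)) :
    ev iE f.toLinearMap C * ev iE (f.toLinearMap ∘ₗ HopfAlgebra.antipode k) C = 1 ∧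
    ev iE (f.toLinearMap ∘ₗ HopfAlgebra.antipode k) C * ev iE f.toLinearMap C = 1 := by
  constructor
  · rw [← ev_conv hC, conv_antipode, ev_one hC]
    exact fun x e => (hc e x).symm.eq
  · rw [← ev_conv hC, antipode_conv, ev_one hC]
    exact fun x e => (hc e _).symm.eq

lemma ev_act {C : E ⊗[k] H} (hC : IsCoel C) {s : H →ₐ[k] F} {act : H →ₗ[k] F →ₗ[k] F}
    (ha : ActRel s act) (iE : E →ₐ[k] B) (iF : F →ₐ[k] B)
    (hEF : ∀ e x, Commute (iE e) (iF x)) (v : F) :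
    ev iE (iF.toLinearMap ∘ₗ act.flip v) C = ev iE (iF.comp s).toLinearMap C * iF v *
      ev iE ((iF.comp s).toLinearMap ∘ₗ HopfAlgebra.antipode k) C := by
  have := congrArg (fun f => ev iE f.ofConv C) (ha.conv iF v)
  simp only at this
  rw [mul_cst, ev_conv hC, ev_mulRight] at this
  · exact this
  · intro x e
    simp only [LinearMap.comp_apply, LinearMap.mulRight_apply, AlgHom.toLinearMap_apply,
      AlgHom.comp_apply]
    rw [← map_mul, (hEF _ _).eq]

end GYDP

namespace GYDP
open WithConv Coalgebra

variable {k H E F B : Type} [Field k] [Ring H] [HopfAlgebra k H]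
  [Ring E] [Algebra k E] [Ring F] [Algebra k F] [Ring B] [Algebra k B]

lemma exists_repr {V W : Type} [AddCommGroup V] [Module k V] [AddCommGroup W] [Module k W]
    (x : V ⊗[k] W) : ∃ (s : Finset ℕ) (p : ℕ → V) (q : ℕ → W), x = ∑ i ∈ s, p i ⊗ₜ[k] q i := by
  induction x with
  | zero => exact ⟨∅, fun _ => 0, fun _ => 0, by simp⟩
  | tmul v w => exact ⟨{0}, fun _ => v, fun _ => w, by simp⟩
  | add x y hx hy =>
    obtain ⟨s, p, q, rfl⟩ := hx
    obtain ⟨s', p', q', rfl⟩ := hy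
    obtain ⟨n, hn⟩ : ∃ n, ∀ i ∈ s, i < n := ⟨s.sup id + 1, fun i hi =>
      Nat.lt_succ_of_le (Finset.le_sup (f := id) hi)⟩
    refine ⟨s ∪ s'.map (addLeftEmbedding n), fun i => if i < n then p i else p' (i - n),
      fun i => if i < n then q i else q' (i - n), ?_⟩
    rw [Finset.sum_union, Finset.sum_map]
    · congr 1
      · exact Finset.sum_congr rfl fun i hi => by simp [hn i hi]
      · simp
    · rw [Finset.disjoint_left]
      intro i hi hi'
      simp only [Finset.mem_map, addLeftEmbedding_apply] at hi'
      obtain ⟨j, _, rfl⟩ := hi'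
      have := hn _ hi
      omega

/-- `E ⊗ H` to `E ⊗ Hᵒᵖ` -/
def opT : E ⊗[k] H →ₗ[k] E ⊗[k] Hᵐᵒᵖ :=
  LinearMap.lTensor E (MulOpposite.opLinearEquiv k).toLinearMap

@[simp] lemma opT_tmul (e : E) (x : H) :
    opT (k := k) (e ⊗ₜ[k] x) = e ⊗ₜ[k] MulOpposite.op x := rfl

lemma opT_injective : Function.Injective (opT : E ⊗[k] H →ₗ[k] E ⊗[k] Hᵐᵒᵖ) :=
  (LinearEquiv.lTensor E (MulOpposite.opLinearEquiv k : H ≃ₗ[k] Hᵐᵒᵖ)).injective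

lemma lift_opT (iE : E →ₐ[k] B) (iH : Hᵐᵒᵖ →ₐ[k] B)
    (hc : ∀ e x, Commute (iE e) (iH x)) (X : E ⊗[k] H) :
    Algebra.TensorProduct.lift iE iH hc (opT X) = ev iE (hl iH) X := by
  induction X with
  | zero => simp
  | tmul e x => simp [hl_apply]
  | add x y hx hy => simp only [map_add, hx, hy]

/-- the coaction on `End` -/
def CoactRel (C : E ⊗[k] H) (coact : E →ₗ[k] E ⊗[k] H) : Prop :=
  ∀ u, opT (coact u) * opT C = opT C * (u ⊗ₜ 1)

lemma CoactRel.op {C : E ⊗[k] H} {coact : E →ₗ[k] E ⊗[k] H} (h : CoactRel C coact)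
    (iE : E →ₐ[k] B) (iH : Hᵐᵒᵖ →ₐ[k] B) (hc : ∀ e x, Commute (iE e) (iH x)) (u : E) :
    ev iE (hl iH) (coact u) * ev iE (hl iH) C = ev iE (hl iH) C * iE u := by
  have := congrArg (Algebra.TensorProduct.lift iE iH hc) (h u)
  rw [map_mul, map_mul, lift_opT, lift_opT] at this
  simpa using this

lemma CoactRel.lin {C : E ⊗[k] H} {coact : E →ₗ[k] E ⊗[k] H} (h : CoactRel C coact)
    (iE : E →ₐ[k] B) (f : H →ₗ[k] B) (hf : ∀ x e, f x * iE e = iE e * f x) (u : E)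
    (t : Finset ℕ) (a : ℕ → E) (y : ℕ → H) (hu : coact u = ∑ j ∈ t, a j ⊗ₜ[k] y j) :
    ∑ j ∈ t, iE (a j) * ev iE (f ∘ₗ LinearMap.mulRight k (y j)) C = ev iE f C * iE u := by
  let K : E ⊗[k] Hᵐᵒᵖ →ₗ[k] B := LinearMap.mul' k B ∘ₗ TensorProduct.map iE.toLinearMap
    (f ∘ₗ (MulOpposite.opLinearEquiv k).symm.toLinearMap)
  have h1 : ∀ e y, ∀ X : E ⊗[k] H, K ((e ⊗ₜ MulOpposite.op y) * opT X) =
      iE e * ev iE (f ∘ₗ LinearMap.mulRight k y) X := by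
    intro e y X
    induction X with
    | zero => simp
    | tmul c x => simp [K, mul_assoc]
    | add X Y hX hY => simp only [map_add, mul_add, hX, hY]
  have h2 : ∀ X : E ⊗[k] H, K (opT X * (u ⊗ₜ 1)) = ev iE f X * iE u := by
    intro X
    induction X with
    | zero => simp
    | tmul c x => simp [K, mul_assoc, hf]
    | add X Y hX hY => simp only [map_add, add_mul, hX, hY]
  have hK := congrArg K (h u)
  rw [← h2, ← hK, hu]
  simp only [map_sum, Finset.sum_mul, opT_tmul, h1]

end GYDP

namespace GYDP
open WithConv Coalgebra

variable {k H E F B : Type} [Field k] [Ring H] [HopfAlgebra k H]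
  [Ring E] [Algebra k E] [Ring F] [Algebra k F] [Ring B] [Algebra k B]

/-- the map from the smash product to the ambient algebra -/
def phi (iE : E →ₐ[k] B) (iF : F →ₐ[k] B) (R R' : B) : E ⊗[k] F →ₗ[k] B :=
  LinearMap.mul' k B ∘ₗ TensorProduct.map iE.toLinearMap
    (LinearMap.mulLeft k R ∘ₗ LinearMap.mulRight k R' ∘ₗ iF.toLinearMap)

@[simp] lemma phi_tmul (iE : E →ₐ[k] B) (iF : F →ₐ[k] B) (R R' : B) (u : E) (v : F) :
    phi (k := k) iE iF R R' (u ⊗ₜ v) = iE u * (R * (iF v * R')) := rfl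

/-- the element `R` -/
def RR (iE : E →ₐ[k] B) (iF : F →ₐ[k] B) (s : H →ₐ[k] F) (C : E ⊗[k] H) : B :=
  ev iE (iF.comp s).toLinearMap C

/-- the inverse of `R` -/
def RI (iE : E →ₐ[k] B) (iF : F →ₐ[k] B) (s : H →ₐ[k] F) (C : E ⊗[k] H) : B :=
  ev iE ((iF.comp s).toLinearMap ∘ₗ HopfAlgebra.antipode k) C

lemma phi_mul {C : E ⊗[k] H} (hC : IsCoel C) {s : H →ₐ[k] F}
    {actF : H →ₗ[k] F →ₗ[k] F} (ha : ActRel s actF)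
    {coactE : E →ₗ[k] E ⊗[k] H} (hco : CoactRel C coactE)
    (iE : E →ₐ[k] B) (iF : F →ₐ[k] B) (hEF : ∀ e x, Commute (iE e) (iF x))
    {mul : E ⊗[k] F →ₗ[k] E ⊗[k] F →ₗ[k] E ⊗[k] F}
    (hmul : GYD.SmashMulChar k H actF coactE mul) (z z' : E ⊗[k] F) :
    phi iE iF (RR iE iF s C) (RI iE iF s C) (mul z z') =
      phi iE iF (RR iE iF s C) (RI iE iF s C) z * phi iE iF (RR iE iF s C) (RI iE iF s C) z' := by
  obtain ⟨hR1, hR2⟩ := ev_sS hC iE (iF.comp s) (fun e x => hEF e _)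
  change RR iE iF s C * RI iE iF s C = 1 at hR1
  change RI iE iF s C * RR iE iF s C = 1 at hR2
  induction z with
  | zero => simp
  | add x y hx hy => simp only [map_add, LinearMap.add_apply, hx, hy, add_mul]
  | tmul u v =>
    induction z' with
    | zero => simp
    | add x y hx hy => simp only [map_add, hx, hy, mul_add]
    | tmul u' v' =>
      obtain ⟨t, a, y, hu⟩ := exists_repr (coactE u')
      rw [hmul u u' v v' t a y hu]
      have key := hco.lin iE (iF.toLinearMap ∘ₗ actF.flip v) (fun x e => (hEF e _).symm.eq)
        u' t a y hu
      have e1 : ∀ w : F, ev iE (iF.toLinearMap ∘ₗ actF.flip w) C =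
        RR iE iF s C * iF w * RI iE iF s C := ev_act hC ha iE iF hEF
      have e2 : ∀ j, (iF.toLinearMap ∘ₗ actF.flip v) ∘ₗ LinearMap.mulRight k (y j) =
          iF.toLinearMap ∘ₗ actF.flip (actF (y j) v) := by
        intro j; ext x; simp [ha.mul]
      simp only [e2, e1] at key
      simp only [map_sum, phi_tmul, map_mul]
      have : ∀ j, iE u * iE (a j) * (RR iE iF s C * (iF (actF (y j) v) * iF v' * RI iE iF s C)) =
        iE u * (iE (a j) * (RR iE iF s C * iF (actF (y j) v) * RI iE iF s C)) *
          (RR iE iF s C * (iF v' * RI iE iF s C)) := by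
        intro j
        simp only [mul_assoc]
        rw [← mul_assoc (RI iE iF s C) (RR iE iF s C), hR2, one_mul]
      simp only [this]
      rw [← Finset.sum_mul, ← Finset.mul_sum, key]
      simp only [mul_assoc]

lemma phi_one {C : E ⊗[k] H} (hC : IsCoel C) {s : H →ₐ[k] F}
    (iE : E →ₐ[k] B) (iF : F →ₐ[k] B) (hEF : ∀ e x, Commute (iE e) (iF x)) :
    phi iE iF (RR iE iF s C) (RI iE iF s C) (1 ⊗ₜ[k] 1) = 1 := by
  obtain ⟨hR1, hR2⟩ := ev_sS hC iE (iF.comp s) (fun e x => hEF e _)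
  simp only [phi_tmul, map_one, one_mul]
  exact hR1

/-- linear version of `TensorActChar` -/
def TAct (actE : H →ₗ[k] E →ₗ[k] E) (actF : H →ₗ[k] F →ₗ[k] F)
    (actS : H →ₗ[k] E ⊗[k] F →ₗ[k] E ⊗[k] F) : Prop :=
  ∀ h u v, actS h (u ⊗ₜ v) = TensorProduct.map (actE.flip u) (actF.flip v)
    (Coalgebra.comul (R := k) h)

lemma tact_of {actE : H →ₗ[k] E →ₗ[k] E} {actF : H →ₗ[k] F →ₗ[k] F}
    {actS : H →ₗ[k] E ⊗[k] F →ₗ[k] E ⊗[k] F}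
    (h : GYD.TensorActChar k H id id actE actF actS) : TAct actE actF actS := by
  intro x u v
  obtain ⟨t, p, q, hx⟩ := exists_repr (Coalgebra.comul (R := k) x)
  rw [h x u v t p q hx, hx]
  simp

lemma phi_act {C : E ⊗[k] H} (hC : IsCoel C) {r : H →ₐ[k] E} {b : H →ₗ[k] H}
    (hY : YDT C r b) {s : H →ₐ[k] F}
    {actE : H →ₗ[k] E →ₗ[k] E} {actF : H →ₗ[k] F →ₗ[k] F} (haE : ActRel r actE)
    (haF : ActRel s actF)
    (iE : E →ₐ[k] B) (iF : F →ₐ[k] B) (hEF : ∀ e x, Commute (iE e) (iF x))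
    {actS : H →ₗ[k] E ⊗[k] F →ₗ[k] E ⊗[k] F} (hS : TAct actE actF actS) (z : E ⊗[k] F) :
    toConv (phi iE iF (RR iE iF s C) (RI iE iF s C) ∘ₗ actS.flip z) *
      (toConv (iE.toLinearMap ∘ₗ r.toLinearMap) * toConv ((iF.comp s).toLinearMap ∘ₗ b)) =
    (toConv (iE.toLinearMap ∘ₗ r.toLinearMap) * toConv ((iF.comp s).toLinearMap ∘ₗ b)) *
      cst (phi iE iF (RR iE iF s C) (RI iE iF s C) z) := by
  obtain ⟨hR1, hR2⟩ := ev_sS hC iE (iF.comp s) (fun e x => hEF e _)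
  change RR iE iF s C * RI iE iF s C = 1 at hR1
  change RI iE iF s C * RR iE iF s C = 1 at hR2
  have hyd := ydt_alg hY iE (iF.comp s) (fun e x => hEF e _)
  change cst (RR iE iF s C) * _ = _ * cst (RR iE iF s C) at hyd
  induction z with
  | zero =>
    simp only [map_zero, LinearMap.comp_zero]
    have : (cst (0:B) : WithConv (H →ₗ[k] B)) = 0 := by ext; simp [cst]
    rw [this, toConv_zero, zero_mul, mul_zero]
  | add x y hx hy =>
    have : ∀ a b : B, (cst (a + b) : WithConv (H →ₗ[k] B)) = cst a + cst b := by
      intro a b; ext; simp [cst]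
    simp only [map_add, this, LinearMap.comp_add, toConv_add, add_mul, mul_add, hx, hy]
  | tmul u v =>
    have e0 : toConv (phi iE iF (RR iE iF s C) (RI iE iF s C) ∘ₗ actS.flip (u ⊗ₜ v)) =
        toConv (iE.toLinearMap ∘ₗ actE.flip u) * (cst (RR iE iF s C) *
          (toConv (iF.toLinearMap ∘ₗ actF.flip v) * cst (RI iE iF s C))) := by
      rw [mul_cst, cst_mul]
      ext x
      rw [LinearMap.convMul_def]
      simp only [LinearMap.comp_apply, LinearMap.flip_apply, hS x u v]
      generalize (Coalgebra.comul (R := k) x) = t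
      induction t with
      | zero => simp
      | tmul p q => simp
      | add x y hx hy => simp only [map_add, hx, hy]
    rw [e0, haE.conv iE u, haF.conv iF v]
    have hRR1 : (cst (RR iE iF s C) : WithConv (H →ₗ[k] B)) * cst (RI iE iF s C) = 1 := by
      rw [cst_mul_cst, hR1, cst_one]
    have hRR2 : (cst (RI iE iF s C) : WithConv (H →ₗ[k] B)) * cst (RR iE iF s C) = 1 := by
      rw [cst_mul_cst, hR2, cst_one]
    have hphi : (cst (phi iE iF (RR iE iF s C) (RI iE iF s C) (u ⊗ₜ v)) :
        WithConv (H →ₗ[k] B)) = cst (iE u) * (cst (RR iE iF s C) * (cst (iF v) *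
          cst (RI iE iF s C))) := by
      rw [cst_mul_cst, cst_mul_cst, cst_mul_cst, phi_tmul]
    rw [hphi]
    have hr := antipode_conv (iE.comp r)
    have hs := antipode_conv (iF.comp s)
    have c1 : (cst (iF v) : WithConv (H →ₗ[k] B)) * toConv (iE.comp r).toLinearMap =
      toConv (iE.comp r).toLinearMap * cst (iF v) := cst_comm _ _ fun h => (hEF _ _).symm.eq
    have c2 : (cst (iE u) : WithConv (H →ₗ[k] B)) * toConv ((iF.comp s).toLinearMap ∘ₗ b) =
      toConv ((iF.comp s).toLinearMap ∘ₗ b) * cst (iE u) := cst_comm _ _ fun h => (hEF _ _).eq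
    change cst (RR iE iF s C) * (_ * toConv (iE.comp r).toLinearMap) =
      (toConv (iE.comp r).toLinearMap * _) * _ at hyd
    change _ * (toConv (iE.comp r).toLinearMap * _) = (toConv (iE.comp r).toLinearMap * _) * _
    generalize toConv (iE.comp r).toLinearMap = r1 at *
    generalize toConv (iF.comp s).toLinearMap = s1 at *
    generalize toConv ((iE.comp r).toLinearMap ∘ₗ HopfAlgebra.antipode k) = r1' at *
    generalize toConv ((iF.comp s).toLinearMap ∘ₗ HopfAlgebra.antipode k) = s1' at *
    generalize toConv ((iF.comp s).toLinearMap ∘ₗ b) = sb at *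
    generalize (cst (RR iE iF s C) : WithConv (H →ₗ[k] B)) = R at *
    generalize (cst (RI iE iF s C) : WithConv (H →ₗ[k] B)) = R' at *
    generalize (cst (iF v) : WithConv (H →ₗ[k] B)) = v1 at *
    generalize (cst (iE u) : WithConv (H →ₗ[k] B)) = u1 at *
    have hyd' : R' * (r1 * sb) = s1 * r1 * R' := by
      calc R' * (r1 * sb) = R' * ((r1 * sb) * R) * R' := by
            rw [mul_assoc, mul_assoc, hRR1, mul_one]
        _ = (R' * R) * (s1 * r1) * R' := by rw [← hyd]; simp only [mul_assoc]
        _ = _ := by rw [hRR2, one_mul]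
    calc r1 * u1 * r1' * (R * (s1 * v1 * s1' * R')) * (r1 * sb)
        = r1 * u1 * r1' * R * s1 * v1 * s1' * (R' * (r1 * sb)) := by simp only [mul_assoc]
      _ = r1 * u1 * r1' * R * s1 * v1 * (s1' * s1) * r1 * R' := by
          rw [hyd']; simp only [mul_assoc]
      _ = r1 * u1 * r1' * R * s1 * (v1 * r1) * R' := by rw [hs]; simp only [mul_assoc, one_mul]
      _ = r1 * u1 * r1' * (R * (s1 * r1)) * v1 * R' := by rw [c1]; simp only [mul_assoc]
      _ = r1 * u1 * (r1' * r1) * sb * R * v1 * R' := by rw [hyd]; simp only [mul_assoc]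
      _ = r1 * (u1 * sb) * R * v1 * R' := by rw [hr]; simp only [mul_assoc, one_mul]
      _ = r1 * sb * (u1 * (R * (v1 * R'))) := by rw [c2]; simp only [mul_assoc]

end GYDP

namespace GYDP
open WithConv Coalgebra

variable {k H E F B : Type} [Field k] [Ring H] [HopfAlgebra k H]
  [Ring E] [Algebra k E] [Ring F] [Algebra k F] [Ring B] [Algebra k B]

/-- inclusion into `B ⊗ Hᵒᵖ` -/
def jL (H : Type) [Ring H] [HopfAlgebra k H] (iE : E →ₐ[k] B) : E →ₐ[k] B ⊗[k] Hᵐᵒᵖ :=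
  (Algebra.TensorProduct.includeLeft : B →ₐ[k] B ⊗[k] Hᵐᵒᵖ).comp iE

/-- inclusion of `Hᵒᵖ` into `B ⊗ Hᵒᵖ` -/
def jR (k H B : Type) [Field k] [Ring H] [HopfAlgebra k H] [Ring B] [Algebra k B] :
    Hᵐᵒᵖ →ₐ[k] B ⊗[k] Hᵐᵒᵖ := Algebra.TensorProduct.includeRight

lemma jLR (iE : E →ₐ[k] B) (e : E) (x : Hᵐᵒᵖ) : Commute (jL H iE e) (jR k H B x) := by
  simp [jL, jR, Commute, SemiconjBy]

lemma jLL (iE : E →ₐ[k] B) (iF : F →ₐ[k] B) (hEF : ∀ e x, Commute (iE e) (iF x)) (e : E) (x : F) :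
    Commute (jL H iE e) (jL H iF x) := by
  have := (hEF e x).eq
  simp [jL, Commute, SemiconjBy, this]

/-- the element of `B ⊗ Hᵒᵖ` defined by `C` -/
def hat (iE : E →ₐ[k] B) (C : E ⊗[k] H) : B ⊗[k] Hᵐᵒᵖ := ev (jL H iE) (hl (jR k H B)) C

lemma hat_tmul (iE : E →ₐ[k] B) (e : E) (x : H) :
    hat iE (e ⊗ₜ[k] x) = iE e ⊗ₜ MulOpposite.op x := by
  simp [hat, jL, jR, hl_apply]

lemma phi_coact {C : E ⊗[k] H} (hC : IsCoel C) {D : F ⊗[k] H}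
    {s : H →ₐ[k] F} {d : H →ₗ[k] H} (hD : YDT D s d)
    {coactE : E →ₗ[k] E ⊗[k] H} (hcoE : CoactRel C coactE)
    {coactF : F →ₗ[k] F ⊗[k] H} (hcoF : CoactRel D coactF)
    (iE : E →ₐ[k] B) (iF : F →ₐ[k] B) (hEF : ∀ e x, Commute (iE e) (iF x))
    {coactS : E ⊗[k] F →ₗ[k] (E ⊗[k] F) ⊗[k] H}
    (hS : GYD.TensorCoactChar k H coactE coactF coactS) (z : E ⊗[k] F) :
    opT (LinearMap.rTensor H (phi iE iF (RR iE iF s C) (RI iE iF s C)) (coactS z)) *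
      (hat iE C * hat iF D) = (hat iE C * hat iF D) *
        (phi iE iF (RR iE iF s C) (RI iE iF s C) z ⊗ₜ 1) := by
  obtain ⟨hR1, hR2⟩ := ev_sS hC iE (iF.comp s) (fun e x => hEF e _)
  change RR iE iF s C * RI iE iF s C = 1 at hR1
  change RI iE iF s C * RR iE iF s C = 1 at hR2
  have hyb := yb hC hD (jL H iE) (jL H iF) (jR k H B) (jLL iE iF hEF) (jLR iE) (jLR iF)
  have hRe : ev (jL H iE) ((jL H iF).comp s).toLinearMap C =
      (RR iE iF s C) ⊗ₜ[k] (1 : Hᵐᵒᵖ) :=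
    (ev_push (Algebra.TensorProduct.includeLeft : B →ₐ[k] B ⊗[k] Hᵐᵒᵖ) iE
      (iF.comp s).toLinearMap C).symm
  rw [hRe] at hyb
  change hat iE C * hat iF D * _ = _ * hat iF D * _ at hyb
  induction z with
  | zero => simp
  | add x y hx hy => simp only [map_add, hx, hy, add_mul, mul_add, TensorProduct.add_tmul]
  | tmul u v =>
    obtain ⟨t, u0, u1, hu⟩ := exists_repr (coactE u)
    obtain ⟨t', v0, v1, hv⟩ := exists_repr (coactF v)
    have e0 : opT (LinearMap.rTensor H (phi iE iF (RR iE iF s C) (RI iE iF s C))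
        (coactS (u ⊗ₜ v))) = hat iE (coactE u) * ((RR iE iF s C) ⊗ₜ 1) * hat iF (coactF v) *
          ((RI iE iF s C) ⊗ₜ 1) := by
      rw [hS u v t t' u0 u1 v0 v1 hu hv, hu, hv]
      have : ∀ {G : Type} [Ring G] [Algebra k G] (i : G →ₐ[k] B) (t : Finset ℕ) (a : ℕ → G) (y : ℕ → H),
        hat i (∑ j ∈ t, a j ⊗ₜ[k] y j) = ∑ j ∈ t, i (a j) ⊗ₜ MulOpposite.op (y j) := by
        intro G _ _ i t a y
        rw [← Finset.sum_congr rfl fun j _ => hat_tmul i (a j) (y j)]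
        simp only [hat, map_sum]
      rw [this, this]
      simp only [map_sum, LinearMap.rTensor_tmul, opT_tmul, phi_tmul, Finset.sum_mul,
        Finset.mul_sum, Algebra.TensorProduct.tmul_mul_tmul, mul_one, mul_assoc, MulOpposite.op_mul]
      exact Finset.sum_comm
    have e1 : hat iE (coactE u) * hat iE C = hat iE C * jL H iE u := hcoE.op (jL H iE) (jR k H B) (jLR iE) u
    have e2 : hat iF (coactF v) * hat iF D = hat iF D * jL H iF v := hcoF.op (jL H iF) (jR k H B) (jLR iF) v
    have c1 : jL H iE u * hat iF D = hat iF D * jL H iE u :=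
      ev_comm _ _ _ (fun e => (jLL (H := H) iE iF hEF u e).eq) (fun e => (jLR (H := H) iE u _).eq) D
    have c2 : jL H iF v * ev (jL H iE) (hl (jR k H B) ∘ₗ d) C =
        ev (jL H iE) (hl (jR k H B) ∘ₗ d) C * jL H iF v :=
      ev_comm _ _ _ (fun e => (jLL (H := H) iE iF hEF e v).symm.eq) (fun e => (jLR (H := H) iF v _).eq) C
    have hphi : (phi iE iF (RR iE iF s C) (RI iE iF s C) (u ⊗ₜ v)) ⊗ₜ (1 : Hᵐᵒᵖ) =
      jL H iE u * (((RR iE iF s C) ⊗ₜ[k] (1 : Hᵐᵒᵖ)) * (jL H iF v *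
          ((RI iE iF s C) ⊗ₜ 1))) := by
      simp [jL]
    have hA1 : ((RR iE iF s C) ⊗ₜ[k] (1 : Hᵐᵒᵖ)) * ((RI iE iF s C) ⊗ₜ 1) = 1 := by
      simp [hR1, Algebra.TensorProduct.one_def]
    have hA2 : ((RI iE iF s C) ⊗ₜ[k] (1 : Hᵐᵒᵖ)) * ((RR iE iF s C) ⊗ₜ 1) = 1 := by
      simp [hR2, Algebra.TensorProduct.one_def]
    rw [e0, hphi]
    generalize (RR iE iF s C) ⊗ₜ[k] (1 : Hᵐᵒᵖ) = R at *
    generalize (RI iE iF s C) ⊗ₜ[k] (1 : Hᵐᵒᵖ) = R' at *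
    generalize ev (jL H iE) (hl (jR k H B) ∘ₗ d) C = Cd at *
    generalize hat iE C = Ch at *
    generalize hat iF D = Dh at *
    generalize jL H iE u = u2 at *
    generalize jL H iF v = v2 at *
    generalize hat iE (coactE u) = uc at *
    generalize hat iF (coactF v) = vc at *
    have hyb' : R' * (Ch * Dh) = Dh * Cd * R' := by
      calc R' * (Ch * Dh) = R' * ((Ch * Dh) * R) * R' := by
            rw [mul_assoc, mul_assoc, hA1, mul_one]
        _ = (R' * R) * Dh * Cd * R' := by rw [hyb]; simp only [mul_assoc]
        _ = _ := by rw [hA2, one_mul]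
    calc uc * R * vc * R' * (Ch * Dh)
        = uc * R * vc * (R' * (Ch * Dh)) := by simp only [mul_assoc]
      _ = uc * R * (vc * Dh) * Cd * R' := by rw [hyb']; simp only [mul_assoc]
      _ = uc * R * Dh * (v2 * Cd) * R' := by rw [e2]; simp only [mul_assoc]
      _ = uc * (R * Dh * Cd) * v2 * R' := by rw [c2]; simp only [mul_assoc]
      _ = (uc * Ch) * Dh * R * v2 * R' := by rw [← hyb]; simp only [mul_assoc]
      _ = Ch * (u2 * Dh) * R * v2 * R' := by rw [e1]; simp only [mul_assoc]
      _ = Ch * Dh * (u2 * (R * (v2 * R'))) := by rw [c1]; simp only [mul_assoc]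

/-- linear inverse of the antipode -/
structure IsT (T : H →ₗ[k] H) : Prop where
  l : ∀ x, T (HopfAlgebra.antipode k x) = x
  r : ∀ x, HopfAlgebra.antipode k (T x) = x

/-- `x₂ T(x₁) = ε(x)` -/
lemma IsT.mul_comm {T : H →ₗ[k] H} (hT : IsT T) (x : H) :
    LinearMap.mul' k H (TensorProduct.map LinearMap.id T
      (TensorProduct.comm k H H (Coalgebra.comul (R := k) x))) =
      algebraMap k H (Coalgebra.counit (R := k) x) := by
  have hinj : Function.Injective (HopfAlgebra.antipode k (A := H)) :=
    Function.LeftInverse.injective hT.l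
  apply hinj
  have h1 := HopfAlgebra.mul_antipode_rTensor_comul_apply (R := k) x
  have h2 := HopfAlgebra.mul_antipode_lTensor_comul_apply (R := k) x
  rw [Algebra.algebraMap_eq_smul_one, map_smul, HopfAlgebra.antipode_one,
    ← Algebra.algebraMap_eq_smul_one, ← h2]
  generalize (Coalgebra.comul (R := k) x) = t
  induction t with
  | zero => simp
  | tmul p q => simp [HopfAlgebra.antipode_mul_antidistrib, hT.r]
  | add x y hx hy => simp only [map_add, hx, hy]

/-- `T(x₂) x₁ = ε(x)` -/
lemma IsT.comm_mul {T : H →ₗ[k] H} (hT : IsT T) (x : H) :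
    LinearMap.mul' k H (TensorProduct.map T LinearMap.id
      (TensorProduct.comm k H H (Coalgebra.comul (R := k) x))) =
      algebraMap k H (Coalgebra.counit (R := k) x) := by
  have hinj : Function.Injective (HopfAlgebra.antipode k (A := H)) :=
    Function.LeftInverse.injective hT.l
  apply hinj
  have h1 := HopfAlgebra.mul_antipode_rTensor_comul_apply (R := k) x
  rw [Algebra.algebraMap_eq_smul_one, map_smul, HopfAlgebra.antipode_one,
    ← Algebra.algebraMap_eq_smul_one, ← h1]
  generalize (Coalgebra.comul (R := k) x) = t
  induction t with
  | zero => simp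
  | tmul p q => simp [HopfAlgebra.antipode_mul_antidistrib, hT.r]
  | add x y hx hy => simp only [map_add, hx, hy]

lemma IsT.conv_hl {T : H →ₗ[k] H} (hT : IsT T) (iH : Hᵐᵒᵖ →ₐ[k] B) :
    toConv (hl iH ∘ₗ T) * toConv (hl iH) = 1 ∧ toConv (hl iH) * toConv (hl iH ∘ₗ T) = 1 := by
  constructor
  · ext x
    have := congrArg (hl iH) (hT.mul_comm x)
    have e : hl iH (algebraMap k H (counit (R := k) x)) =
      (1 : WithConv (H →ₗ[k] B)).ofConv x := by
      simp only [Algebra.algebraMap_eq_smul_one, map_smul, hl_apply, MulOpposite.op_one, map_one,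
        LinearMap.convOne_def, LinearMap.comp_apply, Algebra.linearMap_apply]
    refine Eq.trans ?_ (this.trans e)
    rw [LinearMap.convMul_def]
    simp only [LinearMap.comp_apply]
    generalize (Coalgebra.comul (R := k) x) = t
    induction t with
    | zero => simp
    | tmul p q => simp [hl_apply]
    | add x y hx hy => simp only [map_add, hx, hy]
  · ext x
    have := congrArg (hl iH) (hT.comm_mul x)
    have e : hl iH (algebraMap k H (counit (R := k) x)) =
      (1 : WithConv (H →ₗ[k] B)).ofConv x := by
      simp only [Algebra.algebraMap_eq_smul_one, map_smul, hl_apply, MulOpposite.op_one, map_one,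
        LinearMap.convOne_def, LinearMap.comp_apply, Algebra.linearMap_apply]
    refine Eq.trans ?_ (this.trans e)
    rw [LinearMap.convMul_def]
    simp only [LinearMap.comp_apply]
    generalize (Coalgebra.comul (R := k) x) = t
    induction t with
    | zero => simp
    | tmul p q => simp [hl_apply]
    | add x y hx hy => simp only [map_add, hx, hy]

lemma ev_T {T : H →ₗ[k] H} (hT : IsT T) {C : E ⊗[k] H} (hC : IsCoel C)
    (iE : E →ₐ[k] B) (iH : Hᵐᵒᵖ →ₐ[k] B) (hc : ∀ e x, Commute (iE e) (iH x)) :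
    ev iE (hl iH ∘ₗ T) C * ev iE (hl iH) C = 1 ∧ ev iE (hl iH) C * ev iE (hl iH ∘ₗ T) C = 1 := by
  constructor
  · rw [← ev_conv hC, (hT.conv_hl iH).1, ev_one hC]
    exact fun x e => (hc e _).symm.eq
  · rw [← ev_conv hC, (hT.conv_hl iH).2, ev_one hC]
    exact fun x e => (hc e _).symm.eq

end GYDP

namespace GYDP
open WithConv Coalgebra

variable {k H E F B : Type} [Field k] [Ring H] [HopfAlgebra k H]
  [Ring E] [Algebra k E] [Ring F] [Algebra k F] [Ring B] [Algebra k B]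

lemma phi_surj {T : H →ₗ[k] H} (hT : IsT T) {C : E ⊗[k] H} (hC : IsCoel C) {s : H →ₐ[k] F}
    {act : H →ₗ[k] F →ₗ[k] F} (ha : ActRel s act)
    (iE : E →ₐ[k] B) (iF : F →ₐ[k] B) (hEF : ∀ e x, Commute (iE e) (iF x)) (e : E) (f : F) :
    ∃ z, phi iE iF (RR iE iF s C) (RI iE iF s C) z = iE e * iF f := by
  refine ⟨TensorProduct.map (LinearMap.mulLeft k e) (act.flip f ∘ₗ T) C, ?_⟩
  have e1 : ∀ w : F, ev iE (iF.toLinearMap ∘ₗ act.flip w) C =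
    RR iE iF s C * iF w * RI iE iF s C := ev_act hC ha iE iF hEF
  let K : H ⊗[k] H →ₗ[k] B := iF.toLinearMap ∘ₗ act.flip f ∘ₗ LinearMap.mul' k H ∘ₗ
    TensorProduct.map LinearMap.id T ∘ₗ (TensorProduct.comm k H H).toLinearMap
  have h1 : ∀ (c : E) (x : H) (Y : E ⊗[k] H), iE (e * c) *
      ev iE (iF.toLinearMap ∘ₗ act.flip (act (T x) f)) Y =
      iE e * LinearMap.mul' k B (TensorProduct.map iE.toLinearMap K (mm (c ⊗ₜ x) Y)) := by
    intro c x Y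
    unfold mm
    induction Y with
    | zero => simp
    | add x y hx hy => simp only [map_add, mul_add, TensorProduct.tmul_add, hx, hy]
    | tmul c' x' => simp [K, ha.mul, mul_assoc]
  have h2 : ∀ X : E ⊗[k] H, phi iE iF (RR iE iF s C) (RI iE iF s C)
      (TensorProduct.map (LinearMap.mulLeft k e) (act.flip f ∘ₗ T) X) =
      iE e * LinearMap.mul' k B (TensorProduct.map iE.toLinearMap K (mm X C)) := by
    intro X
    induction X with
    | zero => simp [mm]
    | add x y hx hy =>
      simp only [map_add, hx, hy]
      simp only [mm, TensorProduct.add_tmul, map_add, mul_add]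
    | tmul c x =>
      rw [← h1, e1]
      simp [mul_assoc]
  rw [h2, ← hC.comul, ← LinearMap.comp_apply (TensorProduct.map _ _), LinearMap.map_comp_lTensor]
  congr 1
  have h3 : K ∘ₗ Coalgebra.comul (R := k) = (cst (iF f) : WithConv (H →ₗ[k] B)).ofConv := by
    ext x
    have := hT.mul_comm x
    simp only [K, LinearMap.comp_apply, LinearEquiv.coe_coe, this]
    simp [cst, Algebra.algebraMap_eq_smul_one, ha.one]
  rw [h3]
  exact ev_cst hC iE (iF f)

/-- bijectivity for `B = E ⊗ F` -/
lemma phi_bij {T : H →ₗ[k] H} (hT : IsT T) {C : E ⊗[k] H} (hC : IsCoel C) {s : H →ₐ[k] F}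
    {act : H →ₗ[k] F →ₗ[k] F} (ha : ActRel s act)
    (iE : E →ₐ[k] B) (iF : F →ₐ[k] B) (hEF : ∀ e x, Commute (iE e) (iF x))
    [FiniteDimensional k (E ⊗[k] F)] (L : (E ⊗[k] F) ≃ₗ[k] B)
    (hL : ∀ e f, L (e ⊗ₜ f) = iE e * iF f) :
    Function.Bijective (phi iE iF (RR iE iF s C) (RI iE iF s C)) := by
  have hs : Function.Surjective (phi iE iF (RR iE iF s C) (RI iE iF s C)) := by
    rw [← LinearMap.range_eq_top, eq_top_iff]
    intro w _
    obtain ⟨z, rfl⟩ := L.surjective w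
    induction z with
    | zero => simp
    | add x y hx hy => rw [map_add]; exact add_mem (hx trivial) (hy trivial)
    | tmul e f => rw [hL]; exact phi_surj hT hC ha iE iF hEF e f
  have hs' : Function.Surjective (L.symm.toLinearMap ∘ₗ phi iE iF (RR iE iF s C) (RI iE iF s C)) :=
    L.symm.surjective.comp hs
  refine ⟨?_, hs⟩
  have := LinearMap.injective_iff_surjective.2 hs'
  exact Function.Injective.of_comp this

lemma yd_main {C : E ⊗[k] H} {D D' : F ⊗[k] H} {T : H →ₗ[k] H} (hT : IsT T)
    (hC : IsCoel C) (hD' : IsCoel D')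
    {r : H →ₐ[k] E} {b : H →ₐ[k] H} {s : H →ₐ[k] F} {d d' : H →ₐ[k] H}
    (hCY : YDT C r b.toLinearMap) (hDY : YDT D s d.toLinearMap)
    (hDY' : YDT D' (s.comp b) d'.toLinearMap)
    (hDD : LinearMap.lTensor F b.toLinearMap D' = D)
    [FiniteDimensional k E] [FiniteDimensional k F]
    {actE : H →ₗ[k] E →ₗ[k] E} {actF actF' : H →ₗ[k] F →ₗ[k] F} (haE : ActRel r actE)
    (haF : ActRel s actF) (haF' : ActRel (s.comp b) actF')
    {coactE : E →ₗ[k] E ⊗[k] H} (hcoE : CoactRel C coactE)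
    {coactF : F →ₗ[k] F ⊗[k] H} (hcoF : CoactRel D coactF)
    {coactF' : F →ₗ[k] F ⊗[k] H} (hcoF' : CoactRel D' coactF')
    {mul₁ : E ⊗[k] F →ₗ[k] E ⊗[k] F →ₗ[k] E ⊗[k] F}
    (hmul₁ : GYD.SmashMulChar k H actF coactE mul₁)
    {mul₂ : F ⊗[k] E →ₗ[k] F ⊗[k] E →ₗ[k] F ⊗[k] E}
    (hmul₂ : GYD.SmashMulChar k H actE coactF' mul₂)
    {actS₁ : H →ₗ[k] E ⊗[k] F →ₗ[k] E ⊗[k] F} (hS₁ : TAct actE actF actS₁)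
    {actS₂ : H →ₗ[k] F ⊗[k] E →ₗ[k] F ⊗[k] E} (hS₂ : TAct actF' actE actS₂)
    {coactS₁ : E ⊗[k] F →ₗ[k] (E ⊗[k] F) ⊗[k] H}
    (hcS₁ : GYD.TensorCoactChar k H coactE coactF coactS₁)
    {coactS₂ : F ⊗[k] E →ₗ[k] (F ⊗[k] E) ⊗[k] H}
    (hcS₂ : GYD.TensorCoactChar k H coactF' coactE coactS₂) :
    ∃ θ : (E ⊗[k] F) ≃ₗ[k] (F ⊗[k] E),
      (∀ x y, θ (mul₁ x y) = mul₂ (θ x) (θ y)) ∧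
      θ (1 ⊗ₜ[k] 1) = 1 ⊗ₜ[k] 1 ∧
      (∀ (h : H) x, θ (actS₁ h x) = actS₂ h (θ x)) ∧
      (∀ x, coactS₂ (θ x) = LinearMap.rTensor H θ.toLinearMap (coactS₁ x)) := by
  let iE : E →ₐ[k] E ⊗[k] F := Algebra.TensorProduct.includeLeft
  let iF : F →ₐ[k] E ⊗[k] F := Algebra.TensorProduct.includeRight
  have hEF : ∀ e x, Commute (iE e) (iF x) := fun e x => by simp [iE, iF, Commute, SemiconjBy]
  have hFE : ∀ e x, Commute (iF e) (iE x) := fun e x => (hEF x e).symm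
  have bij1 := phi_bij hT hC haF iE iF hEF (LinearEquiv.refl k _) (fun e f => by simp [iE, iF])
  have bij2 := phi_bij hT hD' haE iF iE hFE (TensorProduct.comm k F E)
    (fun e f => by simp [iE, iF])
  obtain ⟨hQ1, hQ2⟩ := ev_sS hD' iF (iE.comp r) (fun e x => hFE e _)
  change RR iF iE r D' * RI iF iE r D' = 1 at hQ1
  change RI iF iE r D' * RR iF iE r D' = 1 at hQ2
  have m1 := phi_mul hC haF hcoE iE iF hEF hmul₁
  have m2 := phi_mul hD' haE hcoF' iF iE hFE hmul₂
  have o1 := phi_one hC (s := s) iE iF hEF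
  have o2 := phi_one hD' (s := r) iF iE hFE
  have a1 := phi_act hC hCY haE haF iE iF hEF hS₁
  have a2 := phi_act hD' hDY' haF' haE iF iE hFE hS₂
  have co1 := phi_coact hC hDY hcoE hcoF iE iF hEF hcS₁
  have co2 := phi_coact hD' hCY hcoF' hcoE iF iE hFE hcS₂
  have hyd := ydt_alg hDY' iF (iE.comp r) (fun e x => hFE e _)
  change cst (RR iF iE r D') * _ = _ * cst (RR iF iE r D') at hyd
  have hyb := yb hD' hCY (jL H iF) (jL H iE) (jR k H (E ⊗[k] F)) (jLL iF iE hFE) (jLR iF) (jLR iE)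
  have hRe : ev (jL H iF) ((jL H iE).comp r).toLinearMap D' =
      (RR iF iE r D') ⊗ₜ[k] (1 : Hᵐᵒᵖ) :=
    (ev_push (Algebra.TensorProduct.includeLeft : E ⊗[k] F →ₐ[k] (E ⊗[k] F) ⊗[k] Hᵐᵒᵖ) iF
      (iE.comp r).toLinearMap D').symm
  have hDb : ev (jL H iF) (hl (jR k H (E ⊗[k] F)) ∘ₗ b.toLinearMap) D' = hat iF D := by
    rw [← hDD, hat, ev, ev, LinearMap.comp_apply, LinearMap.comp_apply,
      ← LinearMap.comp_apply (TensorProduct.map _ _), LinearMap.map_comp_lTensor]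
  rw [hRe, hDb] at hyb
  change hat iF D' * hat iE C * _ = _ * hat iE C * _ at hyb
  have tC := (ev_T hT hC (jL H iE) (jR k H (E ⊗[k] F)) (jLR iE)).2
  have tD' := (ev_T hT hD' (jL H iF) (jR k H (E ⊗[k] F)) (jLR iF)).2
  change hat iE C * _ = 1 at tC
  change hat iF D' * _ = 1 at tD'
  generalize hφ1 : phi iE iF (RR iE iF s C) (RI iE iF s C) = φ1 at *
  generalize hφ2 : phi iF iE (RR iF iE r D') (RI iF iE r D') = φ2 at *
  generalize RR iF iE r D' = Q at *
  generalize RI iF iE r D' = Q' at *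
  let φ2e := LinearEquiv.ofBijective φ2 bij2
  let φ1e := LinearEquiv.ofBijective φ1 bij1
  let ad : (E ⊗[k] F) ≃ₗ[k] (E ⊗[k] F) := LinearEquiv.ofLinearMap
    (LinearMap.mulLeft k Q ∘ₗ LinearMap.mulRight k Q')
    (LinearMap.mulLeft k Q' ∘ₗ LinearMap.mulRight k Q)
    (LinearMap.ext fun w => by
      simp only [LinearMap.comp_apply, LinearMap.mulLeft_apply, LinearMap.mulRight_apply,
        LinearMap.id_apply]
      rw [mul_assoc, mul_assoc, hQ1, mul_one, ← mul_assoc, hQ1, one_mul])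
    (LinearMap.ext fun w => by
      simp only [LinearMap.comp_apply, LinearMap.mulLeft_apply, LinearMap.mulRight_apply,
        LinearMap.id_apply]
      rw [mul_assoc, mul_assoc, hQ2, mul_one, ← mul_assoc, hQ2, one_mul])
  have had : ∀ w, ad w = Q * (w * Q') := fun w => rfl
  let θ := (φ1e.trans ad).trans φ2e.symm
  have hθ : ∀ z, φ2 (θ z) = Q * (φ1 z * Q') := fun z => φ2e.apply_symm_apply _
  refine ⟨θ, ?_, ?_, ?_, ?_⟩
  · intro x y
    apply bij2.1
    rw [hθ, m1, m2, hθ, hθ]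
    simp only [mul_assoc]
    rw [← mul_assoc Q' Q, hQ2, one_mul]
  · apply bij2.1
    rw [hθ, o1, o2, one_mul, hQ1]
  · intro h x
    apply bij2.1
    rw [hθ]
    have A1 := a1 x
    have A2 := a2 (θ x)
    rw [hθ, ← cst_mul_cst, ← cst_mul_cst] at A2
    have e : toConv (φ2 ∘ₗ actS₂.flip (θ x)) =
        toConv (LinearMap.mulLeft k Q ∘ₗ LinearMap.mulRight k Q' ∘ₗ φ1 ∘ₗ actS₁.flip x) := by
      rw [← cst_mul, ← mul_cst]
      have i1 := conv_antipode (iF.comp (s.comp b))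
      have i2 := conv_antipode ((iE.comp r).comp d')
      have hQc1 : (cst Q : WithConv (H →ₗ[k] (E ⊗[k] F))) * cst Q' = 1 := by
        rw [cst_mul_cst, hQ1, cst_one]
      have hQc2 : (cst Q' : WithConv (H →ₗ[k] (E ⊗[k] F))) * cst Q = 1 := by
        rw [cst_mul_cst, hQ2, cst_one]
      change toConv (φ1 ∘ₗ actS₁.flip x) * (toConv (iE.comp r).toLinearMap *
        toConv (iF.comp (s.comp b)).toLinearMap) = (toConv (iE.comp r).toLinearMap *
        toConv (iF.comp (s.comp b)).toLinearMap) * _ at A1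
      change toConv (φ2 ∘ₗ actS₂.flip (θ x)) * (toConv (iF.comp (s.comp b)).toLinearMap *
        toConv ((iE.comp r).comp d').toLinearMap) = (toConv (iF.comp (s.comp b)).toLinearMap *
        toConv ((iE.comp r).comp d').toLinearMap) * _ at A2
      change cst Q * (toConv (iE.comp r).toLinearMap *
        toConv (iF.comp (s.comp b)).toLinearMap) = (toConv (iF.comp (s.comp b)).toLinearMap *
        toConv ((iE.comp r).comp d').toLinearMap) * cst Q at hyd
      generalize toConv (iF.comp (s.comp b)).toLinearMap = x1 at *
      generalize toConv (iE.comp r).toLinearMap = x2 at *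
      generalize toConv ((iE.comp r).comp d').toLinearMap = x3 at *
      generalize toConv ((iF.comp (s.comp b)).toLinearMap ∘ₗ HopfAlgebra.antipode k) = y1 at *
      generalize toConv (((iE.comp r).comp d').toLinearMap ∘ₗ HopfAlgebra.antipode k) = y3 at *
      generalize toConv (φ2 ∘ₗ actS₂.flip (θ x)) = X2 at *
      generalize toConv (φ1 ∘ₗ actS₁.flip x) = X1 at *
      generalize (cst (φ1 x) : WithConv (H →ₗ[k] (E ⊗[k] F))) = w at *
      generalize (cst Q : WithConv (H →ₗ[k] (E ⊗[k] F))) = q at *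
      generalize (cst Q' : WithConv (H →ₗ[k] (E ⊗[k] F))) = q' at *
      have hinv : (x1 * x3) * (y3 * y1) = 1 := by
        rw [mul_assoc, ← mul_assoc x3, i2, one_mul, i1]
      have hz : X2 * (x1 * x3) = q * (X1 * q') * (x1 * x3) := by
        calc X2 * (x1 * x3) = (x1 * x3) * q * (w * q') := by rw [A2]; simp only [mul_assoc]
          _ = q * (x2 * x1 * w) * q' := by rw [← hyd]; simp only [mul_assoc]
          _ = q * X1 * (x2 * x1) * q' := by rw [← A1]; simp only [mul_assoc]
          _ = q * X1 * (q' * q) * (x2 * x1) * q' := by rw [hQc2, mul_one]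
          _ = q * X1 * q' * (q * (x2 * x1)) * q' := by simp only [mul_assoc]
          _ = q * X1 * q' * (x1 * x3) * (q * q') := by rw [hyd]; simp only [mul_assoc]
          _ = _ := by rw [hQc1]; simp only [mul_assoc, mul_one]
      calc X2 = X2 * (x1 * x3) * (y3 * y1) := by rw [mul_assoc, hinv, mul_one]
        _ = q * (X1 * q') := by rw [hz, mul_assoc, hinv, mul_one]
    have := congrArg (fun f => f.ofConv h) e
    exact this.symm
  · intro x
    have A1 := co1 x
    have A2 := co2 (θ x)
    rw [hθ] at A2
    have eP : ((Q * (φ1 x * Q')) ⊗ₜ[k] (1 : Hᵐᵒᵖ)) =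
      (Q ⊗ₜ[k] (1 : Hᵐᵒᵖ)) * ((φ1 x ⊗ₜ[k] (1 : Hᵐᵒᵖ)) * (Q' ⊗ₜ[k] (1 : Hᵐᵒᵖ))) := by simp
    rw [eP] at A2
    have hq1 : (Q ⊗ₜ[k] (1 : Hᵐᵒᵖ)) * (Q' ⊗ₜ[k] (1 : Hᵐᵒᵖ)) = 1 := by
      simp [hQ1, Algebra.TensorProduct.one_def]
    have hq2 : (Q' ⊗ₜ[k] (1 : Hᵐᵒᵖ)) * (Q ⊗ₜ[k] (1 : Hᵐᵒᵖ)) = 1 := by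
      simp [hQ2, Algebra.TensorProduct.one_def]
    have e : opT (LinearMap.rTensor H φ2 (coactS₂ (θ x))) =
        (Q ⊗ₜ[k] (1 : Hᵐᵒᵖ)) * (opT (LinearMap.rTensor H φ1 (coactS₁ x)) *
          (Q' ⊗ₜ[k] (1 : Hᵐᵒᵖ))) := by
      generalize opT (LinearMap.rTensor H φ2 (coactS₂ (θ x))) = X2 at *
      generalize opT (LinearMap.rTensor H φ1 (coactS₁ x)) = X1 at *
      generalize Q ⊗ₜ[k] (1 : Hᵐᵒᵖ) = q at *
      generalize Q' ⊗ₜ[k] (1 : Hᵐᵒᵖ) = q' at *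
      generalize φ1 x ⊗ₜ[k] (1 : Hᵐᵒᵖ) = w at *
      generalize hat iE C = c at *
      generalize hat iF D = dd at *
      generalize hat iF D' = x1 at *
      generalize ev (jL H iE) (hl (jR k H (E ⊗[k] F)) ∘ₗ T) C = y3 at *
      generalize ev (jL H iF) (hl (jR k H (E ⊗[k] F)) ∘ₗ T) D' = y1 at *
      have hinv : (x1 * c) * (y3 * y1) = 1 := by
        rw [mul_assoc, ← mul_assoc c, tC, one_mul, tD']
      have hz : X2 * (x1 * c) = q * (X1 * q') * (x1 * c) := by
        calc X2 * (x1 * c) = (x1 * c * q) * (w * q') := by rw [A2]; simp only [mul_assoc]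
          _ = q * (c * dd * w) * q' := by rw [hyb]; simp only [mul_assoc]
          _ = q * X1 * (c * dd) * q' := by rw [← A1]; simp only [mul_assoc]
          _ = q * X1 * (q' * q) * (c * dd) * q' := by rw [hq2, mul_one]
          _ = q * X1 * q' * (q * c * dd) * q' := by simp only [mul_assoc]
          _ = q * X1 * q' * (x1 * c) * (q * q') := by rw [← hyb]; simp only [mul_assoc]
          _ = _ := by rw [hq1]; simp only [mul_assoc, mul_one]
      calc X2 = X2 * (x1 * c) * (y3 * y1) := by rw [mul_assoc, hinv, mul_one]
        _ = q * (X1 * q') := by rw [hz, mul_assoc, hinv, mul_one]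
    have e3 : ∀ Z : (E ⊗[k] F) ⊗[k] H,
        (Q ⊗ₜ[k] (1 : Hᵐᵒᵖ)) * (opT (LinearMap.rTensor H φ1 Z) * (Q' ⊗ₜ[k] (1 : Hᵐᵒᵖ))) =
        opT (LinearMap.rTensor H φ2 (LinearMap.rTensor H θ.toLinearMap Z)) := by
      intro Z
      induction Z with
      | zero => simp
      | add x y hx hy => simp only [map_add, add_mul, mul_add, hx, hy]
      | tmul z p =>
        simp only [LinearMap.rTensor_tmul, opT_tmul, LinearEquiv.coe_coe, hθ,
          Algebra.TensorProduct.tmul_mul_tmul, one_mul, mul_one]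
    rw [e3] at e
    exact (LinearEquiv.rTensor H φ2e).injective (opT_injective e)

end GYDP

namespace GYDP
open WithConv Coalgebra

variable {k H E F B : Type} [Field k] [Ring H] [HopfAlgebra k H]
  [Ring E] [Algebra k E] [Ring F] [Algebra k F] [Ring B] [Algebra k B]

lemma sum_join {ι V : Type} [AddCommMonoid V] (g : ι → V) (s s' : Finset ℕ) (f f' : ℕ → ι) :
    ∃ (s'' : Finset ℕ) (f'' : ℕ → ι), ∑ i ∈ s, g (f i) + ∑ i ∈ s', g (f' i) =
      ∑ i ∈ s'', g (f'' i) := by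
  obtain ⟨n, hn⟩ : ∃ n, ∀ i ∈ s, i < n := ⟨s.sup id + 1, fun i hi =>
    Nat.lt_succ_of_le (Finset.le_sup (f := id) hi)⟩
  refine ⟨s ∪ s'.map (addLeftEmbedding n), fun i => if i < n then f i else f' (i - n), ?_⟩
  rw [Finset.sum_union, Finset.sum_map]
  · congr 1
    · exact Finset.sum_congr rfl fun i hi => by simp [hn i hi]
    · simp
  · rw [Finset.disjoint_left]
    intro i hi hi'
    simp only [Finset.mem_map, addLeftEmbedding_apply] at hi'
    obtain ⟨j, _, rfl⟩ := hi'
    have := hn _ hi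
    omega

lemma exists_repr3 (x : (H ⊗[k] H) ⊗[k] H) : ∃ (s : Finset ℕ) (a b c : ℕ → H),
    x = ∑ i ∈ s, (a i ⊗ₜ[k] b i) ⊗ₜ[k] c i := by
  suffices h : ∃ (s : Finset ℕ) (f : ℕ → H × H × H),
      x = ∑ i ∈ s, ((f i).1 ⊗ₜ[k] (f i).2.1) ⊗ₜ[k] (f i).2.2 by
    obtain ⟨s, f, hf⟩ := h
    exact ⟨s, _, _, _, hf⟩
  have hadd := sum_join (fun p : H × H × H => (p.1 ⊗ₜ[k] p.2.1) ⊗ₜ[k] p.2.2)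
  induction x with
  | zero => exact ⟨∅, fun _ => 0, by simp⟩
  | add x y hx hy =>
    obtain ⟨s, f, rfl⟩ := hx
    obtain ⟨s', f', rfl⟩ := hy
    exact hadd s s' f f'
  | tmul p c =>
    induction p with
    | zero => exact ⟨∅, fun _ => 0, by simp⟩
    | add x y hx hy =>
      obtain ⟨s, f, hx⟩ := hx
      obtain ⟨s', f', hy⟩ := hy
      rw [TensorProduct.add_tmul, hx, hy]
      exact hadd s s' f f'
    | tmul a b => exact ⟨{0}, fun _ => (a, b, c), by simp⟩

variable {M : Type} [AddCommGroup M] [Module k M]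

lemma ap_ext [FiniteDimensional k M] {W : Type} [AddCommGroup W] [Module k W]
    (X Y : Module.End k M ⊗[k] W)
    (h : ∀ m, LinearMap.rTensor W (LinearMap.applyₗ (R := k) m) X =
      LinearMap.rTensor W (LinearMap.applyₗ (R := k) m) Y) : X = Y := by
  apply (rTensorHomEquivHomRTensor k M M W).injective
  have key : ∀ (Z : Module.End k M ⊗[k] W) (m : M), rTensorHomEquivHomRTensor k M M W Z m =
      LinearMap.rTensor W (LinearMap.applyₗ (R := k) m) Z := by
    intro Z m
    induction Z with
    | zero => simp
    | tmul e x => simp [rTensorHomEquivHomRTensor_apply]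
    | add x y hx hy => simp only [map_add, LinearMap.add_apply, hx, hy]
  ext1 m
  rw [key, key, h]

lemma exists_coel [FiniteDimensional k M] (coact : M →ₗ[k] M ⊗[k] H) :
    ∃ C : Module.End k M ⊗[k] H,
      ∀ m, LinearMap.rTensor H (LinearMap.applyₗ (R := k) m) C = coact m := by
  refine ⟨(rTensorHomEquivHomRTensor k M M H).symm coact, fun m => ?_⟩
  have key : ∀ (Z : Module.End k M ⊗[k] H) (m : M), rTensorHomEquivHomRTensor k M M H Z m =
      LinearMap.rTensor H (LinearMap.applyₗ (R := k) m) Z := by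
    intro Z m
    induction Z with
    | zero => simp
    | tmul e x => simp [rTensorHomEquivHomRTensor_apply]
    | add x y hx hy => simp only [map_add, LinearMap.add_apply, hx, hy]
  rw [← key, LinearEquiv.apply_symm_apply]

lemma opT_eq_ev (X : E ⊗[k] H) : ev (Algebra.TensorProduct.includeLeft : E →ₐ[k] E ⊗[k] Hᵐᵒᵖ)
    (hl Algebra.TensorProduct.includeRight) X = opT X := by
  induction X with
  | zero => simp
  | tmul e x => simp [hl_apply]
  | add x y hx hy => simp only [map_add, hx, hy]

lemma opT_inv {T : H →ₗ[k] H} (hT : IsT T) {C : E ⊗[k] H} (hC : IsCoel C) :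
    opT (LinearMap.lTensor E T C) * opT C = 1 := by
  have := (ev_T hT hC (Algebra.TensorProduct.includeLeft : E →ₐ[k] E ⊗[k] Hᵐᵒᵖ)
    Algebra.TensorProduct.includeRight (fun e x => by simp [Commute, SemiconjBy])).1
  rw [opT_eq_ev] at this
  rw [← this, ← opT_eq_ev (LinearMap.lTensor E T C), ev, ev, LinearMap.comp_apply,
    LinearMap.comp_apply, ← LinearMap.comp_apply (TensorProduct.map _ _),
    LinearMap.map_comp_lTensor]

lemma mm_sum (t t' : Finset ℕ) (c c' : ℕ → E) (x x' : ℕ → H) :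
    mm (∑ i ∈ t, c i ⊗ₜ[k] x i) (∑ j ∈ t', c' j ⊗ₜ[k] x' j) =
      ∑ i ∈ t, ∑ j ∈ t', (c i * c' j) ⊗ₜ[k] (x i ⊗ₜ[k] x' j) := by
  simp only [mm, TensorProduct.sum_tmul, TensorProduct.tmul_sum, map_sum,
    tensorTensorTensorComm_tmul, map_tmul, LinearMap.mul'_apply, LinearMap.id_apply]
  exact Finset.sum_comm

lemma isCoel_of [FiniteDimensional k M] {coact : M →ₗ[k] M ⊗[k] H}
    (hco : ∀ m : M, LinearMap.rTensor H coact (coact m)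
      = (TensorProduct.assoc k M H H).symm
          (LinearMap.lTensor M (Coalgebra.comul (R := k)) (coact m)))
    (hcu : ∀ m : M,
      TensorProduct.rid k M (LinearMap.lTensor M (Coalgebra.counit (R := k)) (coact m)) = m)
    {C : Module.End k M ⊗[k] H}
    (hC : ∀ m, LinearMap.rTensor H (LinearMap.applyₗ (R := k) m) C = coact m) : IsCoel C := by
  constructor
  · apply ap_ext
    intro m
    rw [← LinearMap.comp_apply, LinearMap.rTensor_comp_lTensor, ← LinearMap.lTensor_comp_rTensor,
      LinearMap.comp_apply, hC]
    have h1 := hco m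
    rw [← LinearEquiv.symm_apply_eq, LinearEquiv.symm_symm] at h1
    rw [← h1]
    obtain ⟨t, c, x, hr⟩ := exists_repr C
    have hm : ∀ m, coact m = ∑ i ∈ t, c i m ⊗ₜ[k] x i := by
      intro m; rw [← hC m, hr]; simp
    rw [hm m, hr, mm_sum]
    simp only [map_sum, LinearMap.rTensor_tmul, hm, TensorProduct.sum_tmul,
      TensorProduct.assoc_tmul]
    rw [Finset.sum_comm]
    rfl
  · apply ap_ext
    intro m
    rw [← LinearMap.comp_apply, LinearMap.rTensor_comp_lTensor, ← LinearMap.lTensor_comp_rTensor,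
      LinearMap.comp_apply, hC]
    apply (TensorProduct.rid k M).injective
    rw [hcu]; simp

lemma actRel_of {θ : H → H} {act : H →ₗ[k] M →ₗ[k] M}
    {actE : H →ₗ[k] Module.End k M →ₗ[k] Module.End k M}
    (h : GYD.EndActChar k H θ act actE) (r : H →ₐ[k] Module.End k M)
    (hr : ∀ x, r x = act (θ x)) : ActRel r actE := by
  intro x v
  obtain ⟨t, p, q, hx⟩ := exists_repr (Coalgebra.comul (R := k) x)
  ext m
  rw [h x v m t p q hx, hx]
  simp [hr]

lemma coactRel_of [FiniteDimensional k M] {Sinv : H → H} {T : H →ₗ[k] H} (hT : IsT T)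
    (hTS : ∀ x, T x = Sinv x) {coact : M →ₗ[k] M ⊗[k] H}
    {coactE : Module.End k M →ₗ[k] Module.End k M ⊗[k] H}
    (h : GYD.EndCoactChar k H Sinv coact coactE) {C : Module.End k M ⊗[k] H} (hC' : IsCoel C)
    (hC : ∀ m, LinearMap.rTensor H (LinearMap.applyₗ (R := k) m) C = coact m) :
    CoactRel C coactE := by
  intro u
  obtain ⟨t, c, x, hr⟩ := exists_repr C
  have hm : ∀ m, coact m = ∑ i ∈ t, c i m ⊗ₜ[k] x i := by
    intro m; rw [← hC m, hr]; simp
  have e : coactE u = ∑ j ∈ t, ∑ l ∈ t, (c l * u * c j) ⊗ₜ[k] (T (x j) * x l) := by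
    apply ap_ext
    intro m
    rw [h u m t (fun j => c j m) x (fun _ => t) (fun j l => c l (u (c j m))) (fun _ l => x l)
      (hm m) (fun j _ => hm _)]
    simp [hTS]
  have e2 : opT (coactE u) = opT C * (u ⊗ₜ 1) * opT (LinearMap.lTensor _ T C) := by
    rw [e, hr]
    simp only [map_sum, opT_tmul, LinearMap.lTensor_tmul, Finset.sum_mul, Finset.mul_sum,
      Algebra.TensorProduct.tmul_mul_tmul, mul_one, MulOpposite.op_mul]
  rw [e2, mul_assoc, opT_inv hT hC', mul_one]

/-- algebra endomorphism from a Hopf automorphism -/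
def hA {φ : H ≃ₗ[k] H} (hφ : GYD.IsHopfAut k H φ) : H →ₐ[k] H :=
  AlgHom.ofLinearMap φ.toLinearMap hφ.2.1 hφ.1

@[simp] lemma hA_apply {φ : H ≃ₗ[k] H} (hφ : GYD.IsHopfAut k H φ) (x : H) : hA hφ x = φ x := rfl

lemma aut_symm {φ : H ≃ₗ[k] H} (hφ : GYD.IsHopfAut k H φ) : GYD.IsHopfAut k H φ.symm := by
  obtain ⟨h1, h2, h3, h4⟩ := hφ
  refine ⟨fun x y => ?_, ?_, fun h => ?_, fun h => ?_⟩
  · rw [LinearEquiv.symm_apply_eq, h1]; simp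
  · rw [LinearEquiv.symm_apply_eq, h2]
  · have := h3 (φ.symm h)
    rw [LinearEquiv.apply_symm_apply] at this
    rw [this, ← LinearMap.comp_apply, ← TensorProduct.map_comp]
    simp
  · have := h4 (φ.symm h)
    rw [LinearEquiv.apply_symm_apply] at this
    exact this.symm

lemma aut_trans {φ ψ : H ≃ₗ[k] H} (hφ : GYD.IsHopfAut k H φ) (hψ : GYD.IsHopfAut k H ψ) :
    GYD.IsHopfAut k H (φ.trans ψ) := by
  obtain ⟨h1, h2, h3, h4⟩ := hφ
  obtain ⟨g1, g2, g3, g4⟩ := hψ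
  refine ⟨fun x y => ?_, ?_, fun h => ?_, fun h => ?_⟩
  · simp [h1, g1]
  · simp [h2, g2]
  · rw [LinearEquiv.trans_apply, g3, h3, ← LinearMap.comp_apply, ← TensorProduct.map_comp]
    rfl
  · rw [LinearEquiv.trans_apply, g4, h4]

lemma coel_twist {C : E ⊗[k] H} (hC : IsCoel C) {φ : H ≃ₗ[k] H} (hφ : GYD.IsHopfAut k H φ) :
    IsCoel (LinearMap.lTensor E φ.toLinearMap C) := by
  constructor
  · have e1 : Coalgebra.comul (R := k) ∘ₗ φ.toLinearMap =
        TensorProduct.map φ.toLinearMap φ.toLinearMap ∘ₗ Coalgebra.comul (R := k) := by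
      ext x; exact hφ.2.2.1 x
    rw [← LinearMap.comp_apply, ← LinearMap.lTensor_comp, e1, LinearMap.lTensor_comp,
      LinearMap.comp_apply, hC.comul]
    obtain ⟨t, c, x, hr⟩ := exists_repr C
    rw [hr]
    simp only [map_sum, LinearMap.lTensor_tmul, mm_sum, TensorProduct.map_tmul]
  · have e1 : Coalgebra.counit (R := k) ∘ₗ φ.toLinearMap = Coalgebra.counit (R := k) := by
      ext x; exact hφ.2.2.2 x
    rw [← LinearMap.comp_apply, ← LinearMap.lTensor_comp, e1, hC.counit]

lemma ydt_twist {C : E ⊗[k] H} {r : H →ₐ[k] E} {d : H →ₗ[k] H} (h : YDT C r d)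
    {b : H ≃ₗ[k] H} (hb : GYD.IsHopfAut k H b) :
    YDT (LinearMap.lTensor E b.symm.toLinearMap C) (r.comp (hA hb))
      (b.symm.toLinearMap ∘ₗ d ∘ₗ b.toLinearMap) := by
  intro x
  have h1 := congrArg (Algebra.TensorProduct.map (AlgHom.id k E) (hA (aut_symm hb))) (h (b x))
  rw [map_mul, map_mul] at h1
  have e0 : ∀ Z : E ⊗[k] H, Algebra.TensorProduct.map (AlgHom.id k E) (hA (aut_symm hb)) Z =
      LinearMap.lTensor E b.symm.toLinearMap Z := fun Z => rfl
  rw [e0 C] at h1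
  convert h1 using 2
  · rw [hb.2.2.1]
    generalize (Coalgebra.comul (R := k) x) = t
    induction t with
    | zero => simp
    | tmul p q => simp
    | add x y hx hy => simp only [map_add, hx, hy]
  · rw [hb.2.2.1]
    generalize (Coalgebra.comul (R := k) x) = t
    induction t with
    | zero => simp
    | tmul p q => simp
    | add x y hx hy => simp only [map_add, hx, hy]

end GYDP

namespace GYDP
open WithConv Coalgebra

variable {k H E F B : Type} [Field k] [Ring H] [HopfAlgebra k H]
  [Ring E] [Algebra k E] [Ring F] [Algebra k F] [Ring B] [Algebra k B]
variable {M : Type} [AddCommGroup M] [Module k M]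

/-- the representation attached to an action -/
def rho {act : H →ₗ[k] M →ₗ[k] M} (h1 : ∀ m : M, act 1 m = m)
    (h2 : ∀ (g h : H) (m : M), act (g * h) m = act g (act h m)) : H →ₐ[k] Module.End k M :=
  AlgHom.ofLinearMap act (LinearMap.ext h1) (fun x y => LinearMap.ext fun m => h2 x y m)

lemma ydt_of [FiniteDimensional k M] {Sinv : H → H} {T : H →ₗ[k] H} (hT : IsT T)
    (hTS : ∀ x, T x = Sinv x) {α β : H ≃ₗ[k] H} (hα : GYD.IsHopfAut k H α)
    {act : H →ₗ[k] M →ₗ[k] M} {coact : M →ₗ[k] M ⊗[k] H}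
    (hM : GYD.IsYD k H Sinv α β act coact) {C : Module.End k M ⊗[k] H}
    (hC : ∀ m, LinearMap.rTensor H (LinearMap.applyₗ (R := k) m) C = coact m) :
    YDT C ((rho hM.1 hM.2.1).comp (hA (aut_symm hα))) (β.toLinearMap ∘ₗ α.symm.toLinearMap) := by
  let iE : Module.End k M →ₐ[k] Module.End k M ⊗[k] Hᵐᵒᵖ := Algebra.TensorProduct.includeLeft
  let iH : Hᵐᵒᵖ →ₐ[k] Module.End k M ⊗[k] Hᵐᵒᵖ := Algebra.TensorProduct.includeRight
  have hc : ∀ e x, Commute (iE e) (iH x) := fun e x => by simp [iE, iH, Commute, SemiconjBy]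
  let ρ := rho hM.1 hM.2.1
  obtain ⟨t, c, x, hr⟩ := exists_repr C
  have hm : ∀ m, coact m = ∑ i ∈ t, c i m ⊗ₜ[k] x i := by
    intro m; rw [← hC m, hr]; simp
  have hconv : cst (opT C) * toConv (iE.toLinearMap ∘ₗ ρ.toLinearMap) =
      toConv ((hl iH ∘ₗ α.toLinearMap) ∘ₗ T) * (toConv (iE.toLinearMap ∘ₗ ρ.toLinearMap) *
        cst (opT C)) * toConv (hl iH ∘ₗ β.toLinearMap) := by
    ext h
    refine (cst_mul_apply _ _ _).trans ?_
    obtain ⟨s, p, q, w, h3⟩ := exists_repr3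
      (LinearMap.rTensor H (Coalgebra.comul (R := k)) (Coalgebra.comul (R := k) h))
    have e1 : ∑ l ∈ t, (c l * ρ h) ⊗ₜ[k] x l = ∑ i ∈ s, ∑ l ∈ t,
        (ρ (q i) * c l) ⊗ₜ[k] (β (w i) * x l * α (T (p i))) := by
      apply ap_ext
      intro m
      have := hM.2.2.2.2 h m s t p q w (fun l => c l m) x h3 (hm m)
      rw [hm] at this
      simp only [map_sum, LinearMap.rTensor_tmul, hTS]
      exact this
    have e2 := congrArg opT e1
    have e3 : opT C * iE (ρ h) = opT (∑ l ∈ t, (c l * ρ h) ⊗ₜ[k] x l) := by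
      rw [hr]
      simp [iE, Finset.sum_mul]
    refine (e3.trans e2).trans ?_
    rw [mul_cst, LinearMap.convMul_def, LinearMap.convMul_def]
    simp only [LinearMap.comp_apply]
    have e4 : ∀ (f g g' : H →ₗ[k] Module.End k M ⊗[k] Hᵐᵒᵖ) (Z : H ⊗[k] H),
      TensorProduct.map (LinearMap.mul' k (Module.End k M ⊗[k] Hᵐᵒᵖ) ∘ₗ TensorProduct.map f g ∘ₗ
        Coalgebra.comul (R := k)) g' Z = TensorProduct.map
        (LinearMap.mul' k (Module.End k M ⊗[k] Hᵐᵒᵖ) ∘ₗ TensorProduct.map f g) g'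
        (LinearMap.rTensor H (Coalgebra.comul (R := k)) Z) := by
      intro f g g' Z
      rw [← LinearMap.comp_apply (TensorProduct.map _ _), LinearMap.map_comp_rTensor]
      rfl
    erw [e4]
    rw [h3, hr]
    simp [iE, iH, hl_apply, Finset.sum_mul, Finset.mul_sum, mul_assoc]
  have hinv : toConv (hl iH ∘ₗ α.toLinearMap) * toConv ((hl iH ∘ₗ α.toLinearMap) ∘ₗ T) = 1 :=
    (hT.conv_hl (iH.comp (AlgHom.op (hA hα)))).2
  have hconv2 : toConv (hl iH ∘ₗ α.toLinearMap) * cst (opT C) *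
        toConv (iE.toLinearMap ∘ₗ ρ.toLinearMap) = toConv (iE.toLinearMap ∘ₗ ρ.toLinearMap) *
        cst (opT C) * toConv (hl iH ∘ₗ β.toLinearMap) := by
    rw [mul_assoc, hconv, ← mul_assoc, ← mul_assoc, hinv, one_mul]
  intro h
  apply opT_injective
  rw [← opT_eq_ev, ← opT_eq_ev]
  have h5 := congrArg (fun f => f.ofConv (α.symm h)) hconv2
  simp only [← opT_eq_ev C] at h5
  rw [mul_cst, mul_cst, LinearMap.convMul_def, LinearMap.convMul_def] at h5
  simp only [LinearMap.comp_apply, (aut_symm hα).2.2.1] at h5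
  convert h5 using 1
  · generalize (Coalgebra.comul (R := k) h) = t
    induction t with
    | zero => simp
    | tmul p q => simp [ev_hl_mul_right iE iH hc, iE, iH, ρ]
    | add x y hx hy => simp only [map_add, hx, hy, mul_add]
  · generalize (Coalgebra.comul (R := k) h) = t
    induction t with
    | zero => simp
    | tmul p q => simp [ev_hl_mul_left iE iH, iE, iH, ρ]
    | add x y hx hy => simp only [map_add, hx, hy, add_mul]

end GYDP

theorem statement_18
    (k H : Type) [Field k] [Ring H] [HopfAlgebra k H]
    (Sinv : H → H) (hS : GYD.IsAntipodeInv k H Sinv)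
    (α β γ δ : H ≃ₗ[k] H)
    (hα : GYD.IsHopfAut k H α) (hβ : GYD.IsHopfAut k H β)
    (hγ : GYD.IsHopfAut k H γ) (hδ : GYD.IsHopfAut k H δ)
    (M N : Type) [AddCommGroup M] [Module k M] [AddCommGroup N] [Module k N]
    [FiniteDimensional k M] [FiniteDimensional k N]
    (actM : H →ₗ[k] M →ₗ[k] M) (coactM : M →ₗ[k] M ⊗[k] H)
    (actN : H →ₗ[k] N →ₗ[k] N) (coactN : N →ₗ[k] N ⊗[k] H)
    (hM : GYD.IsYD k H Sinv ⇑α ⇑β actM coactM)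
    (hN : GYD.IsYD k H Sinv ⇑γ ⇑δ actN coactN)
    -- End(M)
    (actEM : H →ₗ[k] Module.End k M →ₗ[k] Module.End k M)
    (coactEM : Module.End k M →ₗ[k] Module.End k M ⊗[k] H)
    (hactEM : GYD.EndActChar k H ⇑α.symm actM actEM)
    (hcoactEM : GYD.EndCoactChar k H Sinv coactM coactEM)
    -- End(N)
    (actEN : H →ₗ[k] Module.End k N →ₗ[k] Module.End k N)
    (coactEN : Module.End k N →ₗ[k] Module.End k N ⊗[k] H)
    (hactEN : GYD.EndActChar k H ⇑γ.symm actN actEN)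
    (hcoactEN : GYD.EndCoactChar k H Sinv coactN coactEN)
    -- End(^M N), where ^M N = ^{(α,β)}N is N with action h ⇀ n = γ⁻¹βγα⁻¹(h)·n and
    -- coaction n ↦ n₍₀₎ ⊗ αβ⁻¹(n₍₁₎); its first automorphism is αγα⁻¹
    (actETw : H →ₗ[k] Module.End k N →ₗ[k] Module.End k N)
    (coactETw : Module.End k N →ₗ[k] Module.End k N ⊗[k] H)
    (hactETw : GYD.EndActChar k H (fun h => α (γ.symm (α.symm h)))
      (actN ∘ₗ (α.symm.trans (γ.trans (β.trans γ.symm))).toLinearMap) actETw)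
    (hcoactETw : GYD.EndCoactChar k H Sinv
      ((LinearMap.lTensor N (β.symm.trans α).toLinearMap) ∘ₗ coactN) coactETw)
    -- the smash product End(M) # End(N)
    (mul₁ : (Module.End k M ⊗[k] Module.End k N) →ₗ[k]
        (Module.End k M ⊗[k] Module.End k N) →ₗ[k] (Module.End k M ⊗[k] Module.End k N))
    (hmul₁ : GYD.SmashMulChar k H actEN coactEM mul₁)
    (actS₁ : H →ₗ[k] (Module.End k M ⊗[k] Module.End k N)
        →ₗ[k] (Module.End k M ⊗[k] Module.End k N))
    (coactS₁ : Module.End k M ⊗[k] Module.End k N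
        →ₗ[k] (Module.End k M ⊗[k] Module.End k N) ⊗[k] H)
    (hactS₁ : GYD.TensorActChar k H id id actEM actEN actS₁)
    (hcoactS₁ : GYD.TensorCoactChar k H coactEM coactEN coactS₁)
    -- the smash product End(^M N) # End(M)
    (mul₂ : (Module.End k N ⊗[k] Module.End k M) →ₗ[k]
        (Module.End k N ⊗[k] Module.End k M) →ₗ[k] (Module.End k N ⊗[k] Module.End k M))
    (hmul₂ : GYD.SmashMulChar k H actEM coactETw mul₂)
    (actS₂ : H →ₗ[k] (Module.End k N ⊗[k] Module.End k M)
        →ₗ[k] (Module.End k N ⊗[k] Module.End k M))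
    (coactS₂ : Module.End k N ⊗[k] Module.End k M
        →ₗ[k] (Module.End k N ⊗[k] Module.End k M) ⊗[k] H)
    (hactS₂ : GYD.TensorActChar k H id id actETw actEM actS₂)
    (hcoactS₂ : GYD.TensorCoactChar k H coactETw coactEM coactS₂) :
    -- End(M) # End(N) ≅ End(^M N) # End(M) as algebras in the Yetter-Drinfeld category
    ∃ θ : (Module.End k M ⊗[k] Module.End k N) ≃ₗ[k] (Module.End k N ⊗[k] Module.End k M),
      (∀ x y : Module.End k M ⊗[k] Module.End k N, θ (mul₁ x y) = mul₂ (θ x) (θ y)) ∧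
      θ ((1 : Module.End k M) ⊗ₜ[k] (1 : Module.End k N))
          = (1 : Module.End k N) ⊗ₜ[k] (1 : Module.End k M) ∧
      (∀ (h : H) (x : Module.End k M ⊗[k] Module.End k N), θ (actS₁ h x) = actS₂ h (θ x)) ∧
      (∀ x : Module.End k M ⊗[k] Module.End k N,
          coactS₂ (θ x) = LinearMap.rTensor H θ.toLinearMap (coactS₁ x)) := by
  obtain ⟨T, hT, hTS⟩ : ∃ T : H →ₗ[k] H, GYDP.IsT T ∧ ∀ x, T x = Sinv x := by
    let S : H ≃ₗ[k] H := LinearEquiv.ofBijective (HopfAlgebra.antipode k)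
      ⟨Function.LeftInverse.injective hS.2, Function.RightInverse.surjective hS.1⟩
    refine ⟨S.symm.toLinearMap, ⟨fun x => S.symm_apply_apply x, fun x => S.apply_symm_apply x⟩,
      fun x => ?_⟩
    rw [LinearEquiv.coe_coe, LinearEquiv.symm_apply_eq]
    exact (hS.1 x).symm
  obtain ⟨C, hC⟩ := GYDP.exists_coel coactM
  obtain ⟨D, hD⟩ := GYDP.exists_coel coactN
  have cC := GYDP.isCoel_of hM.2.2.1 hM.2.2.2.1 hC
  have cD := GYDP.isCoel_of hN.2.2.1 hN.2.2.2.1 hD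
  have yC := GYDP.ydt_of hT hTS hα hM hC
  have yD := GYDP.ydt_of hT hTS hγ hN hD
  have hb := GYDP.aut_trans (GYDP.aut_symm hα) hβ
  have hd := GYDP.aut_trans (GYDP.aut_symm hγ) hδ
  have hd' := GYDP.aut_trans (GYDP.aut_trans hb hd) (GYDP.aut_symm hb)
  have cD' := GYDP.coel_twist cD (GYDP.aut_symm hb)
  have yD' := GYDP.ydt_twist yD hb
  have hD' : ∀ m, LinearMap.rTensor H (LinearMap.applyₗ (R := k) m)
      (LinearMap.lTensor (Module.End k N) (α.symm.trans β).symm.toLinearMap D) =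
      ((LinearMap.lTensor N (β.symm.trans α).toLinearMap) ∘ₗ coactN) m := by
    intro m
    rw [← LinearMap.comp_apply, LinearMap.rTensor_comp_lTensor, ← LinearMap.lTensor_comp_rTensor,
      LinearMap.comp_apply, hD]
    rfl
  refine GYDP.yd_main (b := GYDP.hA hb) (d := GYDP.hA hd) (d' := GYDP.hA hd') hT cC cD' yC yD yD' ?_
    (GYDP.actRel_of hactEM _ fun x => rfl) (GYDP.actRel_of hactEN _ fun x => rfl)
    (GYDP.actRel_of hactETw _ fun x => ?_) (GYDP.coactRel_of hT hTS hcoactEM cC hC)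
    (GYDP.coactRel_of hT hTS hcoactEN cD hD) (GYDP.coactRel_of hT hTS hcoactETw cD' hD')
    hmul₁ hmul₂ (GYDP.tact_of hactS₁) (GYDP.tact_of hactS₂) hcoactS₁ hcoactS₂
  · rw [← LinearMap.comp_apply, ← LinearMap.lTensor_comp]
    have : (GYDP.hA hb).toLinearMap ∘ₗ (α.symm.trans β).symm.toLinearMap = LinearMap.id := by
      ext x
      exact LinearEquiv.apply_symm_apply (α.symm.trans β) x
    rw [this]; simp
  · simp [GYDP.rho]

end
end

section
/- Let α, β ∈ Aut_Hopf(H) and M a finite-dimensional (α,β)-Yetter-Drinfeld module, and set A = End(M), an algebra in _H𝒴𝒟^H. Then A is H-Azumaya: both maps F : A # A̅ → End(A), F(a # b)(c) = a c₍₀₎ (c₍₁₎·b), and G : A̅ # A → End(A)^op, G(a # b)(c) = a₍₀₎ (a₍₁₎·c) b, are bijective, where End(A) carries the canonical structures (h·u)(a) = h₁·u(S(h₂)·a) and u₍₀₎(a) ⊗ u₍₁₎ = u(a₍₀₎)₍₀₎ ⊗ S⁻¹(a₍₁₎) u(a₍₀₎)₍₁₎, and End(A)^op carries the structures (h·u)(a)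 = h₂·u(S⁻¹(h₁)·a) and u₍₀₎(a) ⊗ u₍₁₎ = u(a₍₀₎)₍₀₎ ⊗ u(a₍₀₎)₍₁₎ S(a₍₁₎). -/
open TensorProduct

noncomputable section

namespace GYDProof

open Coalgebra HopfAlgebra

section hopf

variable {k H : Type} [Field k] [Ring H] [HopfAlgebra k H]

lemma hopfAut_antipode (φ : H ≃ₗ[k] H) (hφ : GYD.IsHopfAut k H φ) (h : H) :
    φ (antipode k h) = antipode k (φ h) := by
  obtain ⟨hm, h1, hc, he⟩ := hφ
  have key : WithConv.toConv (antipode k (A := H)) =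
      WithConv.toConv (φ.symm.toLinearMap ∘ₗ antipode k ∘ₗ φ.toLinearMap) := by
    apply left_inv_eq_right_inv (a := WithConv.toConv (LinearMap.id : H →ₗ[k] H))
    · exact LinearMap.antipode_mul_id
    · ext c
      apply φ.injective
      have h2 := sum_mul_antipode_eq_algebraMap_counit
        (⟨(ℛ k c).index, fun i => φ ((ℛ k c).left i), fun i => φ ((ℛ k c).right i), by
          rw [hc, ← (ℛ k c).eq]; simp⟩ : Coalgebra.Repr k (φ c) _)
      rw [(ℛ k c).convMul_apply]
      simp only [map_sum, hm]
      simp only [he] at h2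
      simp only [LinearMap.convOne_apply, Algebra.algebraMap_eq_smul_one, map_smul, h1]
      rw [Algebra.algebraMap_eq_smul_one] at h2
      rw [← h2]
      simp
  have := congrArg (fun f => φ (f.ofConv h)) key
  simpa using this

variable (Si : H →ₗ[k] H) (hS1 : ∀ h, antipode k (Si h) = h) (hS2 : ∀ h, Si (antipode k h) = h)
include hS1 hS2

lemma Si_mul (a b : H) : Si (a * b) = Si b * Si a := by
  have : antipode k (Si (a * b)) = antipode k (Si b * Si a) := by
    rw [antipode_mul_antidistrib, hS1, hS1, hS1]
  have := congrArg Si this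
  simpa [hS2] using this

lemma Si_one : Si 1 = 1 := by
  have := hS2 1
  rwa [antipode_one] at this

lemma Si_conv_a (h : H) : ∑ i ∈ (ℛ k h).index, Si ((ℛ k h).right i) * (ℛ k h).left i
    = algebraMap k H (counit h) := by
  have := congrArg Si (sum_antipode_mul_eq_algebraMap_counit (ℛ k h))
  simpa [Si_mul Si hS1 hS2, hS2, Algebra.algebraMap_eq_smul_one, Si_one Si hS1 hS2] using this

lemma Si_conv_b (h : H) : ∑ i ∈ (ℛ k h).index, (ℛ k h).right i * Si ((ℛ k h).left i)
    = algebraMap k H (counit h) := by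
  have := congrArg Si (sum_mul_antipode_eq_algebraMap_counit (ℛ k h))
  simpa [Si_mul Si hS1 hS2, hS2, Algebra.algebraMap_eq_smul_one, Si_one Si hS1 hS2] using this

end hopf

section con

variable {k H A : Type} [Field k] [Ring H] [HopfAlgebra k H] [Ring A] [Algebra k A]
  {t : Finset ℕ} {X : ℕ → A} {x : ℕ → H}

variable (k) in
/-- Abstract form of the comodule axioms. -/
def IsCon (t : Finset ℕ) (X : ℕ → A) (x : ℕ → H) : Prop :=
  (∑ i ∈ t, ∑ j ∈ t, (X i * X j) ⊗ₜ[k] (x i ⊗ₜ[k] x j) = ∑ i ∈ t, X i ⊗ₜ[k] comul (R := k) (x i)) ∧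
  (∑ i ∈ t, counit (R := k) (x i) • X i = 1)

lemma con_apply (hc : IsCon k t X x) {N : Type} [AddCommGroup N] [Module k N]
    (L : A →ₗ[k] H →ₗ[k] N) (μ : H →ₗ[k] H →ₗ[k] H)
    (hμ : ∀ h, TensorProduct.lift μ (comul h) = algebraMap k H (counit h)) :
    ∑ i ∈ t, ∑ j ∈ t, L (X i * X j) (μ (x i) (x j)) = L 1 1 := by
  have := congrArg (fun z => TensorProduct.lift L (LinearMap.lTensor A (TensorProduct.lift μ) z)) hc.1
  simp only [map_sum, LinearMap.lTensor_tmul, TensorProduct.lift.tmul, hμ,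
    Algebra.algebraMap_eq_smul_one, map_smul] at this
  rw [this, ← hc.2]
  simp

lemma con1 (hc : IsCon k t X x) {N : Type} [AddCommGroup N] [Module k N]
    (L : A →ₗ[k] H →ₗ[k] N) :
    ∑ i ∈ t, ∑ j ∈ t, L (X i * X j) (x i * antipode k (x j)) = L 1 1 := by
  refine con_apply hc L ((LinearMap.mul k H).compl₂ (antipode k)) fun h => ?_
  rw [← sum_mul_antipode_eq_algebraMap_counit (ℛ k h)]
  conv_lhs => rw [← (ℛ k h).eq]
  simp

lemma con2 (hc : IsCon k t X x) {N : Type} [AddCommGroup N] [Module k N]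
    (L : A →ₗ[k] H →ₗ[k] N) :
    ∑ i ∈ t, ∑ j ∈ t, L (X i * X j) (antipode k (x i) * x j) = L 1 1 := by
  refine con_apply hc L ((LinearMap.mul k H).comp (antipode k)) fun h => ?_
  rw [← sum_antipode_mul_eq_algebraMap_counit (ℛ k h)]
  conv_lhs => rw [← (ℛ k h).eq]
  simp

variable (Si : H →ₗ[k] H) (hS1 : ∀ h, antipode k (Si h) = h) (hS2 : ∀ h, Si (antipode k h) = h)
include hS1 hS2

lemma con3 (hc : IsCon k t X x) {N : Type} [AddCommGroup N] [Module k N]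
    (L : A →ₗ[k] H →ₗ[k] N) :
    ∑ i ∈ t, ∑ j ∈ t, L (X i * X j) (Si (x j) * x i) = L 1 1 := by
  refine con_apply hc L ((LinearMap.mul k H).flip.compl₂ Si) fun h => ?_
  rw [← Si_conv_a Si hS1 hS2 h]
  conv_lhs => rw [← (ℛ k h).eq]
  simp

lemma con4 (hc : IsCon k t X x) {N : Type} [AddCommGroup N] [Module k N]
    (L : A →ₗ[k] H →ₗ[k] N) :
    ∑ i ∈ t, ∑ j ∈ t, L (X i * X j) (x j * Si (x i)) = L 1 1 := by
  refine con_apply hc L ((LinearMap.mul k H).flip.comp Si) fun h => ?_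
  rw [← Si_conv_b Si hS1 hS2 h]
  conv_lhs => rw [← (ℛ k h).eq]
  simp

end con

section ops

variable {k H A : Type} [Field k] [Ring H] [HopfAlgebra k H] [Ring A] [Algebra k A]

/-- `b ↦ X b σ(x)` -/
def opV (t : Finset ℕ) (X : ℕ → A) (x : ℕ → H) (σ : H →ₗ[k] A) : A →ₗ[k] A :=
  ∑ i ∈ t, LinearMap.mulRight k (σ (x i)) ∘ₗ LinearMap.mulLeft k (X i)

/-- `a ⊗ b ↦ a X ⊗ x · b` -/
def opQ (t : Finset ℕ) (X : ℕ → A) (x : ℕ → H) (act : H →ₗ[k] A →ₗ[k] A) :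
    A ⊗[k] A →ₗ[k] A ⊗[k] A :=
  ∑ i ∈ t, TensorProduct.map (LinearMap.mulRight k (X i)) (act (x i))

/-- `a ⊗ b ↦ X a ⊗ x · b` -/
def opP (t : Finset ℕ) (X : ℕ → A) (x : ℕ → H) (act : H →ₗ[k] A →ₗ[k] A) :
    A ⊗[k] A →ₗ[k] A ⊗[k] A :=
  ∑ i ∈ t, TensorProduct.map (LinearMap.mulLeft k (X i)) (act (x i))

/-- `p, q ↦ σ(p) b σ(S q)` -/
def opB (σ : H →ₗ[k] A) (b : A) : H →ₗ[k] H →ₗ[k] A :=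
  ((LinearMap.mul k A).comp (LinearMap.mulRight k b ∘ₗ σ)).compl₂ (σ ∘ₗ antipode k)

/-- `h, b ↦ σ(h) b` -/
def lact (σ : H →ₗ[k] A) : H →ₗ[k] A →ₗ[k] A := (LinearMap.mul k A).comp σ

/-- `h, b ↦ b σ(h)` -/
def ract (σ : H →ₗ[k] A) : H →ₗ[k] A →ₗ[k] A := (LinearMap.mul k A).flip.comp σ

/-- `a ⊗ b ↦ (c ↦ a c b)` -/
def opΛ (k : Type) {A : Type} [Field k] [Ring A] [Algebra k A] :
    A ⊗[k] A →ₗ[k] Module.End k A :=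
  TensorProduct.lift (LinearMap.mk₂ k
    (fun a b => LinearMap.mulRight k b ∘ₗ LinearMap.mulLeft k a)
    (fun _ _ _ => by ext; simp [add_mul]) (fun _ _ _ => by ext; simp)
    (fun _ _ _ => by ext; simp [mul_add]) (fun _ _ _ => by ext; simp))

variable {t : Finset ℕ} {X : ℕ → A} {x : ℕ → H}

@[simp] lemma opV_apply (σ : H →ₗ[k] A) (b : A) :
    opV t X x σ b = ∑ i ∈ t, X i * b * σ (x i) := by simp [opV]

@[simp] lemma opQ_tmul (act : H →ₗ[k] A →ₗ[k] A) (a b : A) :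
    opQ t X x act (a ⊗ₜ b) = ∑ i ∈ t, (a * X i) ⊗ₜ[k] act (x i) b := by simp [opQ]

@[simp] lemma opP_tmul (act : H →ₗ[k] A →ₗ[k] A) (a b : A) :
    opP t X x act (a ⊗ₜ b) = ∑ i ∈ t, (X i * a) ⊗ₜ[k] act (x i) b := by simp [opP]

@[simp] lemma opB_apply (σ : H →ₗ[k] A) (b : A) (p q : H) :
    opB σ b p q = σ p * b * σ (antipode k q) := by simp [opB]

@[simp] lemma lact_apply (σ : H →ₗ[k] A) (h : H) (b : A) : lact σ h b = σ h * b := rfl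

@[simp] lemma ract_apply (σ : H →ₗ[k] A) (h : H) (b : A) : ract σ h b = b * σ h := rfl

@[simp] lemma opΛ_tmul (a b c : A) : opΛ k (a ⊗ₜ b) c = a * c * b := rfl

/-- `y, h ↦ f y ⊗ act h b` -/
def LQ (f : A →ₗ[k] A) (act : H →ₗ[k] A →ₗ[k] A) (b : A) : A →ₗ[k] H →ₗ[k] A ⊗[k] A :=
  ((TensorProduct.mk k A A).comp f).compl₂ (act.flip b)

@[simp] lemma LQ_apply (f : A →ₗ[k] A) (act : H →ₗ[k] A →ₗ[k] A) (b y : A) (h : H) :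
    LQ f act b y h = f y ⊗ₜ act h b := rfl

section Si
variable (Si : H →ₗ[k] H) (hS1 : ∀ h, antipode k (Si h) = h) (hS2 : ∀ h, Si (antipode k h) = h)
include hS1 hS2

lemma opQ_left_inv (hc : IsCon k t X x) (act : H →ₗ[k] A →ₗ[k] A)
    (h1 : ∀ b, act 1 b = b) (hm : ∀ g h b, act (g * h) b = act g (act h b)) :
    opQ t X x (act ∘ₗ Si) ∘ₗ opQ t X x act = LinearMap.id := by
  ext a b
  have := con3 Si hS1 hS2 hc (LQ (LinearMap.mulLeft k a) act b)
  simpa [h1, hm, mul_assoc] using this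

lemma opQ_right_inv (hc : IsCon k t X x) (act : H →ₗ[k] A →ₗ[k] A)
    (h1 : ∀ b, act 1 b = b) (hm : ∀ g h b, act (g * h) b = act g (act h b)) :
    opQ t X x act ∘ₗ opQ t X x (act ∘ₗ Si) = LinearMap.id := by
  ext a b
  have := con4 Si hS1 hS2 hc (LQ (LinearMap.mulLeft k a) act b)
  simpa [h1, hm, mul_assoc] using this

lemma opV_left_inv (hc : IsCon k t X x) (σ : H →ₐ[k] A) :
    opV t X x (σ.toLinearMap ∘ₗ Si) ∘ₗ opV t X x σ.toLinearMap = LinearMap.id := by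
  ext b
  have := con4 Si hS1 hS2 hc ((LinearMap.mul k A).comp (LinearMap.mulRight k b) |>.compl₂ σ.toLinearMap)
  rw [Finset.sum_comm] at this
  simpa [mul_assoc, Finset.mul_sum, Finset.sum_mul] using this
end Si

lemma opP_left_inv (hc : IsCon k t X x) (σ : H →ₐ[k] A) :
    opP t X x (lact σ.toLinearMap) ∘ₗ opP t X x (lact (σ.toLinearMap ∘ₗ antipode k))
      = LinearMap.id := by
  ext a b
  have := con1 hc (LQ (LinearMap.mulRight k a) (lact σ.toLinearMap) b)
  rw [Finset.sum_comm] at this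
  simpa [mul_assoc] using this

lemma opR_right_inv (hc : IsCon k t X x) (σ : H →ₐ[k] A) :
    opQ t X x (ract (σ.toLinearMap ∘ₗ antipode k)) ∘ₗ opQ t X x (ract σ.toLinearMap)
      = LinearMap.id := by
  ext a b
  have := con1 hc (LQ (LinearMap.mulLeft k a) (ract σ.toLinearMap) b)
  simpa [mul_assoc] using this

/-- the element `U = X σ(S⁻¹ x)` -/
def elU (t : Finset ℕ) (X : ℕ → A) (x : ℕ → H) (Si : H →ₗ[k] H) (σ : H →ₐ[k] A) : A :=
  ∑ i ∈ t, X i * σ (Si (x i))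

section act
variable (σ : H →ₐ[k] A) (act : H →ₗ[k] A →ₗ[k] A)
  (hact : ∀ h b, act h b = TensorProduct.lift (opB σ.toLinearMap b) (comul h))
include hact

lemma act_one (b : A) : act 1 b = b := by
  simp [hact, Algebra.TensorProduct.one_def]

lemma act_mul (g h : H) (b : A) : act (g * h) b = act g (act h b) := by
  rw [hact, hact, hact, Bialgebra.comul_mul, ← (ℛ k g).eq, ← (ℛ k h).eq]
  simp [Finset.sum_mul, Finset.mul_sum, antipode_mul_antidistrib, mul_assoc]
  rw [Finset.sum_comm]

lemma act_split (hc : IsCon k t X x) (f : A →ₗ[k] A) (b : A) :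
    ∑ i ∈ t, f (X i) ⊗ₜ[k] act (x i) b =
      ∑ i ∈ t, ∑ j ∈ t, f (X i * X j) ⊗ₜ[k] (σ (x i) * b * σ (antipode k (x j))) := by
  have := congrArg (TensorProduct.map f (TensorProduct.lift (opB σ.toLinearMap b))) hc.1
  simp only [map_sum, TensorProduct.map_tmul, TensorProduct.lift.tmul, opB_apply, ← hact] at this
  exact this.symm

lemma opQ_act_eq (hc : IsCon k t X x) : opQ t X x act =
    opQ t X x (ract (σ.toLinearMap ∘ₗ antipode k)) ∘ₗ opQ t X x (lact σ.toLinearMap) := by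
  ext a b
  have := act_split σ act hact hc (LinearMap.mulLeft k a) b
  simpa [mul_assoc] using this

variable (Si : H →ₗ[k] H) (hS1 : ∀ h, antipode k (Si h) = h) (hS2 : ∀ h, Si (antipode k h) = h)
include hS1 hS2

lemma Q_key (hc : IsCon k t X x) (b : A) :
    ∑ j ∈ t, X j ⊗ₜ[k] act (Si (x j)) b =
      ∑ l ∈ t, ∑ j ∈ t, (X l * X j) ⊗ₜ[k] (σ (Si (x j)) * b * σ (x l)) := by
  have h1 : opQ t X x (lact (σ.toLinearMap) ∘ₗ Si) (opQ t X x (ract σ.toLinearMap) (1 ⊗ₜ b)) =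
      ∑ l ∈ t, ∑ j ∈ t, (X l * X j) ⊗ₜ[k] (σ (Si (x j)) * b * σ (x l)) := by
    simp [mul_assoc]
  have h2 : opQ t X x (act ∘ₗ Si) (1 ⊗ₜ b) = ∑ j ∈ t, X j ⊗ₜ[k] act (Si (x j)) b := by simp
  rw [← h1, ← h2]
  have e1 := opQ_left_inv Si hS1 hS2 hc act (act_one σ act hact) (act_mul σ act hact)
  have e2 := opQ_right_inv Si hS1 hS2 hc act (act_one σ act hact) (act_mul σ act hact)
  have e3 := opQ_right_inv Si hS1 hS2 hc (lact σ.toLinearMap) (by simp) (by simp [mul_assoc])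
  have e4 := opR_right_inv hc σ
  have hinj : Function.Injective (opQ t X x act) :=
    Function.LeftInverse.injective (fun z => LinearMap.congr_fun e1 z)
  apply hinj
  rw [← LinearMap.comp_apply, e2]
  rw [opQ_act_eq σ act hact hc]
  simp only [LinearMap.comp_apply]
  have e3' := LinearMap.congr_fun e3 (opQ t X x (ract σ.toLinearMap) (1 ⊗ₜ b))
  simp only [LinearMap.comp_apply] at e3'
  rw [e3']
  exact (LinearMap.congr_fun e4 (1 ⊗ₜ b)).symm

lemma mulQ_key (hc : IsCon k t X x) (b : A) :
    ∑ j ∈ t, X j * act (Si (x j)) b = opV t X x σ.toLinearMap (elU t X x Si σ * b) := by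
  have := congrArg (LinearMap.mul' k A) (Q_key σ act hact Si hS1 hS2 hc b)
  simp only [map_sum, LinearMap.mul'_apply] at this
  rw [this]
  simp [elU, Finset.sum_mul, mul_assoc]
  rw [Finset.sum_comm]

lemma F_formula (hc : IsCon k t X x) (a b c : A) :
    ∑ i ∈ t, ∑ j ∈ t, a * (X i * c * X j) * act (Si (x j) * x i) b =
      opΛ k (LinearMap.lTensor A (opV t X x σ.toLinearMap ∘ₗ LinearMap.mulLeft k (elU t X x Si σ))
        (opQ t X x act (a ⊗ₜ b))) c := by
  simp only [opQ_tmul, map_sum, LinearMap.lTensor_tmul, LinearMap.comp_apply,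
    LinearMap.mulLeft_apply, ← mulQ_key σ act hact Si hS1 hS2 hc, LinearMap.sum_apply, opΛ_tmul,
    act_mul σ act hact, Finset.mul_sum, mul_assoc]

lemma G_formula (hc : IsCon k t X x) (a b c : A) :
    ∑ i ∈ t, ∑ j ∈ t, (X i * a * X j) * act (Si (x j) * x i) c * b =
      opΛ k (LinearMap.rTensor A (opV t X x σ.toLinearMap)
        (opP t X x (lact (σ.toLinearMap ∘ₗ antipode k))
        (LinearMap.rTensor A (LinearMap.mulRight k (elU t X x Si σ))
        (opQ t X x (lact σ.toLinearMap) (a ⊗ₜ b))))) c := by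
  have h1 : ∑ i ∈ t, ∑ j ∈ t, (X i * a * X j) * act (Si (x j) * x i) c * b =
      ∑ i ∈ t, X i * (a * (opV t X x σ.toLinearMap (elU t X x Si σ * act (x i) c) * b)) := by
    simp only [← mulQ_key σ act hact Si hS1 hS2 hc, act_mul σ act hact, Finset.mul_sum,
      Finset.sum_mul, mul_assoc]
  rw [h1]
  have h2 := congrArg (LinearMap.mul' k A ∘ₗ LinearMap.lTensor A
    (LinearMap.mulLeft k a ∘ₗ LinearMap.mulRight k b ∘ₗ opV t X x σ.toLinearMap ∘ₗ
      LinearMap.mulLeft k (elU t X x Si σ))) (act_split σ act hact hc LinearMap.id c)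
  simp only [map_sum, LinearMap.comp_apply, LinearMap.lTensor_tmul, LinearMap.id_apply,
    LinearMap.mul'_apply, LinearMap.mulLeft_apply, LinearMap.mulRight_apply] at h2
  rw [h2]
  simp only [opV_apply, opQ_tmul, opP_tmul, map_sum, LinearMap.rTensor_tmul, LinearMap.sum_apply,
    opΛ_tmul, lact_apply, LinearMap.mulRight_apply, LinearMap.comp_apply, Finset.mul_sum,
    Finset.sum_mul, TensorProduct.sum_tmul, mul_assoc, AlgHom.toLinearMap_apply]
  refine Finset.sum_comm.trans ?_
  refine (Finset.sum_congr rfl fun _ _ => Finset.sum_comm).trans ?_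
  exact Finset.sum_comm

end act

end ops

section yd

variable {k H A : Type} [Field k] [Ring H] [HopfAlgebra k H] [Ring A] [Algebra k A]
  {t : Finset ℕ} {X : ℕ → A} {x : ℕ → H}

/-- the universal coaction element -/
def elρ (k : Type) {H A : Type} [Field k] [Ring H] [HopfAlgebra k H] [Ring A] [Algebra k A]
    (t : Finset ℕ) (X : ℕ → A) (x : ℕ → H) : A ⊗[k] H := ∑ i ∈ t, X i ⊗ₜ[k] x i

variable (Si : H →ₗ[k] H) (hS1 : ∀ h, antipode k (Si h) = h) (hS2 : ∀ h, Si (antipode k h) = h)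
  (α : H →ₐ[k] H) (β : H →ₗ[k] H) (π σ : H →ₐ[k] A)
include hS1 hS2

lemma yd_flip
    (hYD : ∀ h, elρ k t X x * (π h ⊗ₜ 1) = ∑ i ∈ (ℛ k h).index,
      TensorProduct.map π.toLinearMap β (comul ((ℛ k h).right i)) * elρ k t X x *
        (1 ⊗ₜ α (Si ((ℛ k h).left i)))) (h : H) :
    TensorProduct.map π.toLinearMap β (comul h) * elρ k t X x =
      ∑ i ∈ (ℛ k h).index, elρ k t X x * (π ((ℛ k h).right i) ⊗ₜ α ((ℛ k h).left i)) := by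
  let o : A ⊗[k] H →ₗ[k] (A ⊗[k] H)ᵐᵒᵖ := (MulOpposite.opLinearEquiv k).toLinearMap
  let f : H →ₗ[k] (A ⊗[k] H)ᵐᵒᵖ := o ∘ₗ TensorProduct.mk k A H 1 ∘ₗ α.toLinearMap ∘ₗ Si
  let g : H →ₗ[k] (A ⊗[k] H)ᵐᵒᵖ := o ∘ₗ TensorProduct.mk k A H 1 ∘ₗ α.toLinearMap
  let Y : H →ₗ[k] (A ⊗[k] H)ᵐᵒᵖ := o ∘ₗ LinearMap.mulLeft k (elρ k t X x) ∘ₗ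
    (TensorProduct.mk k A H).flip 1 ∘ₗ π.toLinearMap
  let Z : H →ₗ[k] (A ⊗[k] H)ᵐᵒᵖ := o ∘ₗ LinearMap.mulRight k (elρ k t X x) ∘ₗ
    TensorProduct.map π.toLinearMap β ∘ₗ comul
  have e1 : WithConv.toConv Y = WithConv.toConv f * WithConv.toConv Z := by
    ext h
    rw [(ℛ k h).convMul_apply]
    have := congrArg o (hYD h)
    rw [map_sum] at this
    exact this
  have e2 : WithConv.toConv g * WithConv.toConv f = 1 := by
    ext h
    rw [(ℛ k h).convMul_apply]
    have := congrArg (fun z => o ((1 : A) ⊗ₜ[k] α z)) (Si_conv_a Si hS1 hS2 h)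
    simp only [map_sum, TensorProduct.tmul_sum] at this
    refine Eq.trans ?_ (this.trans ?_)
    · refine Finset.sum_congr rfl fun i _ => ?_
      apply MulOpposite.unop_injective
      simp [f, g, o]
    · apply MulOpposite.unop_injective
      simp [o, Algebra.algebraMap_eq_smul_one, Algebra.TensorProduct.one_def]
  have e3 : WithConv.toConv Z = WithConv.toConv g * WithConv.toConv Y := by
    rw [e1, ← mul_assoc, e2, one_mul]
  have e4 := congrArg (fun F => MulOpposite.unop (F h)) e3
  simp only [(ℛ k h).convMul_apply] at e4
  refine Eq.trans (Eq.trans rfl e4) ?_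
  rw [Finset.unop_sum]
  refine Finset.sum_congr rfl fun i _ => ?_
  simp [Y, g, o, mul_assoc]

lemma U_comm
    (hσ : ∀ h, σ (α h) = π h) (hα : ∀ h, Si (α h) = α (Si h))
    (hYD : ∀ h, elρ k t X x * (π h ⊗ₜ 1) = ∑ i ∈ (ℛ k h).index,
      TensorProduct.map π.toLinearMap β (comul ((ℛ k h).right i)) * elρ k t X x *
        (1 ⊗ₜ α (Si ((ℛ k h).left i)))) (h : H) :
    elU t X x Si σ * σ (Si (β h)) = π (antipode k h) * elU t X x Si σ := by
  let ψ : A ⊗[k] H →ₗ[k] A := LinearMap.mul' k A ∘ₗ LinearMap.lTensor A (σ.toLinearMap ∘ₗ Si)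
  have hψ : ∀ y h, ψ (y ⊗ₜ h) = y * σ (Si h) := fun y h => by simp [ψ]
  have h1 : ∀ h, ∑ i ∈ (ℛ k h).index,
      π ((ℛ k h).left i) * (elU t X x Si σ * σ (Si (β ((ℛ k h).right i)))) =
        counit (R := k) h • elU t X x Si σ := by
    intro h
    have := congrArg ψ (yd_flip Si hS1 hS2 α β π hYD h)
    rw [← (ℛ k h).eq] at this
    simp only [elρ, map_sum, TensorProduct.map_tmul, Finset.sum_mul, Finset.mul_sum,
      Algebra.TensorProduct.tmul_mul_tmul, hψ, Si_mul Si hS1 hS2, map_mul, hα, hσ,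
      AlgHom.toLinearMap_apply] at this
    have e5 : ∑ i ∈ (ℛ k h).index, ∑ j ∈ t, X j * π ((ℛ k h).right i) *
        (π (Si ((ℛ k h).left i)) * σ (Si (x j))) = counit (R := k) h • elU t X x Si σ := by
      rw [Finset.sum_comm, elU, Finset.smul_sum]
      refine Finset.sum_congr rfl fun j _ => ?_
      have := congrArg (fun z => X j * π z * σ (Si (x j))) (Si_conv_b Si hS1 hS2 h)
      simp only [map_sum, Finset.mul_sum, Finset.sum_mul, map_mul,
        Algebra.algebraMap_eq_smul_one, map_smul, map_one] at this
      simpa [mul_assoc] using this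
    rw [← e5]
    refine Eq.trans ?_ (this.trans ?_)
    · simp only [elU, Finset.sum_mul, Finset.mul_sum, mul_assoc]
      try exact Finset.sum_comm
    · rfl
  let D : H →ₗ[k] A := LinearMap.mulLeft k (elU t X x Si σ) ∘ₗ σ.toLinearMap ∘ₗ Si ∘ₗ β
  let E : H →ₗ[k] A := (LinearMap.toSpanSingleton k A (elU t X x Si σ)) ∘ₗ counit
  let P : H →ₗ[k] A := π.toLinearMap
  let PS : H →ₗ[k] A := π.toLinearMap ∘ₗ antipode k
  have e1 : WithConv.toConv P * WithConv.toConv D = WithConv.toConv E := by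
    ext h
    rw [(ℛ k h).convMul_apply]
    exact h1 h
  have e2 : WithConv.toConv PS * WithConv.toConv P = 1 := by
    ext h
    rw [(ℛ k h).convMul_apply]
    have := congrArg π (sum_antipode_mul_eq_algebraMap_counit (ℛ k h))
    simpa [PS, P] using this
  have e3 : WithConv.toConv D = WithConv.toConv PS * WithConv.toConv E := by
    rw [← e1, ← mul_assoc, e2, one_mul]
  have e4 := congrArg (fun F => F h) e3
  simp only [(ℛ k h).convMul_apply] at e4
  refine Eq.trans (Eq.trans rfl e4) ?_
  have h6 := congrArg (fun z => π (antipode k (TensorProduct.rid k H z)) * elU t X x Si σ)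
    (Coalgebra.sum_tmul_counit_eq (ℛ k h))
  simp only [map_sum, Finset.sum_mul, TensorProduct.rid_tmul, map_smul, one_smul,
    smul_mul_assoc] at h6
  simpa [PS, E] using h6

lemma U_left_inv (hc : IsCon k t X x)
    (hσ : ∀ h, σ (α h) = π h) (hα : ∀ h, Si (α h) = α (Si h))
    (Bi : H → H) (hB : ∀ h, β (Bi h) = h)
    (hYD : ∀ h, elρ k t X x * (π h ⊗ₜ 1) = ∑ i ∈ (ℛ k h).index,
      TensorProduct.map π.toLinearMap β (comul ((ℛ k h).right i)) * elρ k t X x *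
        (1 ⊗ₜ α (Si ((ℛ k h).left i)))) :
    (∑ i ∈ t, X i * π (antipode k (Bi (antipode k (x i))))) * elU t X x Si σ = 1 := by
  have h1 := con3 Si hS1 hS2 hc ((LinearMap.mul k A).compl₂ σ.toLinearMap)
  simp only [LinearMap.compl₂_apply, LinearMap.mul_apply', AlgHom.toLinearMap_apply, map_one,
    mul_one, map_mul] at h1
  rw [← h1, Finset.sum_mul]
  refine Finset.sum_congr rfl fun i _ => ?_
  rw [mul_assoc, ← U_comm Si hS1 hS2 α β π σ hσ hα hYD, hB, hS2]
  simp only [elU, Finset.sum_mul, Finset.mul_sum, mul_assoc]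

end yd

lemma reindex {ι : Type} [Nonempty ι] (S : Finset ι) :
    ∃ (t : Finset ℕ) (e : ℕ → ι), ∀ (N : Type) [AddCommMonoid N] (F : ι → N),
      ∑ i ∈ t, F (e i) = ∑ i ∈ S, F i := by
  classical
  let q := S.equivFin
  refine ⟨Finset.range S.card, fun n => if h : n < S.card then (q.symm ⟨n, h⟩ : S).1
    else Classical.arbitrary ι, fun N _ F => ?_⟩
  rw [Finset.sum_range]
  simp only [Fin.is_lt, dite_true, Fin.eta]
  rw [Equiv.sum_comp q.symm (fun i : S => F i.1), Finset.sum_coe_sort]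

lemma exists_repr {k P Q : Type} [Field k] [AddCommGroup P] [AddCommGroup Q] [Module k P]
    [Module k Q] (z : P ⊗[k] Q) :
    ∃ (t : Finset ℕ) (p : ℕ → P) (q : ℕ → Q), z = ∑ i ∈ t, p i ⊗ₜ[k] q i := by
  obtain ⟨S, hS⟩ := TensorProduct.exists_finset z
  obtain ⟨t, e, he⟩ := reindex S
  exact ⟨t, fun i => (e i).1, fun i => (e i).2, by
    rw [hS, ← he _ (fun i : P × Q => i.1 ⊗ₜ[k] i.2)]⟩

section endo

variable {k M N : Type} [Field k] [AddCommGroup M] [Module k M] [FiniteDimensional k M]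
  [AddCommGroup N] [Module k N]

omit [FiniteDimensional k M] in
lemma hom_rTensor (z : Module.End k M ⊗[k] N) (m : M) :
    TensorProduct.rTensorHomToHomRTensor (.id k) M M N z m =
      LinearMap.rTensor N (LinearMap.applyₗ (R := k) m) z := by
  induction z with
  | zero => simp
  | tmul a b => simp
  | add a b ha hb => simp [ha, hb]

lemma end_ext (z w : Module.End k M ⊗[k] N)
    (h : ∀ m, LinearMap.rTensor N (LinearMap.applyₗ (R := k) m) z =
      LinearMap.rTensor N (LinearMap.applyₗ (R := k) m) w) : z = w := by
  apply (rTensorHomEquivHomRTensor k M M N).injective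
  have := rTensorHomEquivHomRTensor_toLinearMap k M M N
  ext m : 1
  have hz := LinearMap.congr_fun (LinearMap.congr_fun this z) m
  have hw := LinearMap.congr_fun (LinearMap.congr_fun this w) m
  rw [hom_rTensor, h m, ← hom_rTensor] at hz
  exact hz.trans hw.symm

lemma exists_coef (c : M →ₗ[k] M ⊗[k] N) :
    ∃ (t : Finset ℕ) (X : ℕ → Module.End k M) (x : ℕ → N),
      ∀ m, c m = ∑ i ∈ t, X i m ⊗ₜ[k] x i := by
  obtain ⟨t, X, x, h⟩ := exists_repr ((rTensorHomEquivHomRTensor k M M N).symm c)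
  refine ⟨t, X, x, fun m => ?_⟩
  have h2 := congrArg (fun z => rTensorHomEquivHomRTensor k M M N z m) h
  simp only [LinearEquiv.apply_symm_apply] at h2
  have := rTensorHomEquivHomRTensor_toLinearMap k M M N
  have hw := LinearMap.congr_fun (LinearMap.congr_fun this (∑ i ∈ t, X i ⊗ₜ[k] x i)) m
  rw [h2]
  refine hw.trans ?_
  simp

lemma opΛ_bij : Function.Bijective (opΛ k (A := Module.End k M)) := by
  rcases subsingleton_or_nontrivial M with hs | hn
  · have : Subsingleton (Module.End k M) := inferInstance
    have h2 : Subsingleton (Module.End k M ⊗[k] Module.End k M) := by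
      refine ⟨fun z w => ?_⟩
      have : ∀ z : Module.End k M ⊗[k] Module.End k M, z = 0 := by
        intro z
        induction z with
        | zero => rfl
        | tmul a b => rw [Subsingleton.elim a 0, TensorProduct.zero_tmul]
        | add a b ha hb => rw [ha, hb, add_zero]
      rw [this z, this w]
    exact ⟨fun _ _ _ => Subsingleton.elim _ _, fun f => ⟨0, Subsingleton.elim _ _⟩⟩
  · let b := Module.finBasis k M
    have : Nonempty (Fin (Module.finrank k M)) := ⟨⟨0, Module.finrank_pos⟩⟩
    have hA : IsAzumaya k (Matrix (Fin (Module.finrank k M)) (Fin (Module.finrank k M)) k) :=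
      IsAzumaya.matrix k _
    have hB : IsAzumaya k (Module.End k M) :=
      IsAzumaya.of_AlgEquiv k _ _ (LinearMap.toMatrixAlgEquiv b).symm
    have h1 := hB.bij
    let e := TensorProduct.congr (LinearEquiv.refl k (Module.End k M))
      (MulOpposite.opLinearEquiv k (M := Module.End k M))
    have h2 : opΛ k (A := Module.End k M) =
        (AlgHom.mulLeftRight k (Module.End k M)).toLinearMap ∘ₗ e.toLinearMap := by
      ext a b c : 4
      simp [e]
    rw [h2]
    exact h1.comp e.bijective

lemma bij_of_left_inv {V : Type} [AddCommGroup V] [Module k V] [FiniteDimensional k V]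
    (f g : V →ₗ[k] V) (h : g ∘ₗ f = LinearMap.id) : Function.Bijective f := by
  have hi : Function.Injective f :=
    Function.LeftInverse.injective (fun z => LinearMap.congr_fun h z)
  exact ⟨hi, LinearMap.injective_iff_surjective.1 hi⟩

end endo

end GYDProof

theorem statement_19
    (k H : Type) [Field k] [Ring H] [HopfAlgebra k H]
    (Sinv : H → H) (hS : GYD.IsAntipodeInv k H Sinv)
    (α β : H ≃ₗ[k] H)
    (hα : GYD.IsHopfAut k H α) (hβ : GYD.IsHopfAut k H β)
    (M : Type) [AddCommGroup M] [Module k M] [FiniteDimensional k M]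
    (actM : H →ₗ[k] M →ₗ[k] M) (coactM : M →ₗ[k] M ⊗[k] H)
    (hM : GYD.IsYD k H Sinv ⇑α ⇑β actM coactM)
    -- A = End(M) with its Yetter-Drinfeld algebra structure
    (actE : H →ₗ[k] Module.End k M →ₗ[k] Module.End k M)
    (coactE : Module.End k M →ₗ[k] Module.End k M ⊗[k] H)
    (hactE : GYD.EndActChar k H ⇑α.symm actM actE)
    (hcoactE : GYD.EndCoactChar k H Sinv coactM coactE)
    -- the map F : A # A-bar → End(A), F(a # b)(c) = a c₍₀₎ (c₍₁₎ · b)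
    (FF : Module.End k M ⊗[k] Module.End k M →ₗ[k] Module.End k (Module.End k M))
    (hFF : ∀ (a b c : Module.End k M) (t : Finset ℕ)
        (c₀ : ℕ → Module.End k M) (c₁ : ℕ → H),
        coactE c = ∑ j ∈ t, c₀ j ⊗ₜ[k] c₁ j →
        FF (a ⊗ₜ[k] b) c = ∑ j ∈ t, a * c₀ j * actE (c₁ j) b)
    -- the map G : A-bar # A → End(A)^op, G(a # b)(c) = a₍₀₎ (a₍₁₎ · c) b
    (GG : Module.End k M ⊗[k] Module.End k M →ₗ[k] (Module.End k (Module.End k M))ᵐᵒᵖ)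
    (hGG : ∀ (a b c : Module.End k M) (t : Finset ℕ)
        (a₀ : ℕ → Module.End k M) (a₁ : ℕ → H),
        coactE a = ∑ j ∈ t, a₀ j ⊗ₜ[k] a₁ j →
        (GG (a ⊗ₜ[k] b)).unop c = ∑ j ∈ t, a₀ j * actE (a₁ j) c * b) :
    -- A is H-Azumaya
    Function.Bijective FF ∧ Function.Bijective GG := by
  classical
  -- linear inverse of the antipode
  let Si : H →ₗ[k] H :=
    { toFun := Sinv
      map_add' := fun a b => by
        have := hS.2 (Sinv a + Sinv b)
        rwa [map_add, hS.1, hS.1] at this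
      map_smul' := fun c a => by
        have := hS.2 (c • Sinv a)
        rwa [map_smul, hS.1] at this }
  have hS1 : ∀ h, HopfAlgebra.antipode k (Si h) = h := hS.1
  have hS2 : ∀ h, Si (HopfAlgebra.antipode k h) = h := hS.2
  obtain ⟨hM1, hM2, hM3, hM4, hM5⟩ := hM
  obtain ⟨t, X, x, hX⟩ := GYDProof.exists_coef coactM
  have hc : GYDProof.IsCon k t X x := by
    constructor
    · apply GYDProof.end_ext
      intro m
      have := congrArg (TensorProduct.assoc k M H H) (hM3 m)
      rw [LinearEquiv.apply_symm_apply] at this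
      simp only [hX, map_sum, LinearMap.rTensor_tmul, LinearMap.lTensor_tmul,
        TensorProduct.sum_tmul, TensorProduct.assoc_tmul] at this
      simp only [map_sum, LinearMap.rTensor_tmul, LinearMap.applyₗ_apply_apply,
        Module.End.mul_apply]
      rw [Finset.sum_comm]
      exact this
    · ext m
      have := hM4 m
      simp only [hX, map_sum, LinearMap.lTensor_tmul, TensorProduct.rid_tmul] at this
      simpa using this
  let αe : H ≃ₐ[k] H := AlgEquiv.ofLinearEquiv α hα.2.1 hα.1
  let π : H →ₐ[k] Module.End k M := AlgHom.ofLinearMap actM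
    (LinearMap.ext fun m => hM1 m) (fun g h => LinearMap.ext fun m => hM2 g h m)
  let σ : H →ₐ[k] Module.End k M := π.comp αe.symm.toAlgHom
  have hσ : ∀ h, σ (αe.toAlgHom h) = π h := fun h => by simp [σ]
  have hαS : ∀ h, Si (αe.toAlgHom h) = αe.toAlgHom (Si h) := fun h => by
    have h1 : α (HopfAlgebra.antipode k (Si h)) = HopfAlgebra.antipode k (α (Si h)) :=
      GYDProof.hopfAut_antipode α hα (Si h)
    rw [hS1] at h1
    have h2 := congrArg Si h1
    rw [hS2] at h2
    exact h2
  have hact : ∀ h b, actE h b =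
      TensorProduct.lift (GYDProof.opB σ.toLinearMap b) (Coalgebra.comul h) := by
    intro h b
    ext m
    obtain ⟨s, p, q, hpq⟩ := GYDProof.exists_repr (Coalgebra.comul (R := k) h)
    rw [hactE h b m s p q hpq, hpq]
    simp only [map_sum, TensorProduct.lift.tmul, GYDProof.opB_apply, LinearMap.sum_apply,
      Module.End.mul_apply]
    rfl
  have hco : ∀ c, coactE c = ∑ i ∈ t, ∑ j ∈ t, (X i * c * X j) ⊗ₜ[k] (Si (x j) * x i) := by
    intro c
    apply GYDProof.end_ext
    intro m
    rw [hcoactE c m t (fun j => X j m) x (fun _ => t) (fun j l => X l (c (X j m)))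
      (fun j l => x l) (hX m) (fun j _ => hX _)]
    rw [Finset.sum_comm]
    simp only [map_sum, LinearMap.rTensor_tmul, LinearMap.applyₗ_apply_apply,
        Module.End.mul_apply]
    rfl
  have hYD : ∀ h, GYDProof.elρ k t X x * (π h ⊗ₜ 1) = ∑ i ∈ (Coalgebra.Repr.arbitrary k h).index,
      TensorProduct.map π.toLinearMap β.toLinearMap
        (Coalgebra.comul ((Coalgebra.Repr.arbitrary k h).right i)) * GYDProof.elρ k t X x *
        (1 ⊗ₜ αe.toAlgHom (Si ((Coalgebra.Repr.arbitrary k h).left i))) := by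
    intro h
    apply GYDProof.end_ext
    intro m
    set R := Coalgebra.Repr.arbitrary k h with hR
    have hch := fun i => GYDProof.exists_repr (Coalgebra.comul (R := k) (R.right i))
    choose s p q hpq using hch
    obtain ⟨t', e, he⟩ := GYDProof.reindex
      (ι := (_ : H × H) × ℕ) (R.index.sigma s)
    have h1 := hM5 h m t' t (fun n => R.left (e n).1) (fun n => p (e n).1 (e n).2)
      (fun n => q (e n).1 (e n).2) (fun j => X j m) x ?_ (hX m)
    · rw [he _ (fun n : (_ : H × H) × ℕ => ∑ j ∈ t, (actM (p n.1 n.2)) (X j m) ⊗ₜ[k]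
        (β (q n.1 n.2) * x j * α (Sinv (R.left n.1)))), Finset.sum_sigma, hX] at h1
      simp only [hpq, GYDProof.elρ, Finset.sum_mul, Finset.mul_sum, map_sum,
        TensorProduct.map_tmul, Algebra.TensorProduct.tmul_mul_tmul, LinearMap.rTensor_tmul,
        LinearMap.applyₗ_apply_apply, Module.End.mul_apply, mul_one]
      refine h1.trans ?_
      refine Finset.sum_congr rfl fun i _ => ?_
      first
        | rfl
        | (rw [Finset.sum_comm]; rfl)
    · rw [← Coalgebra.coassoc_symm_apply, ← R.eq]
      rw [he _ (fun n : (_ : H × H) × ℕ => (R.left n.1 ⊗ₜ[k] p n.1 n.2) ⊗ₜ[k] q n.1 n.2),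
        Finset.sum_sigma]
      simp [hpq, TensorProduct.tmul_sum]
  have hWU := GYDProof.U_left_inv Si hS1 hS2 αe.toAlgHom β.toLinearMap π σ hc hσ hαS β.symm
    (fun h => β.apply_symm_apply h) hYD
  set U := GYDProof.elU t X x Si σ with hU
  set W := ∑ i ∈ t, X i * π (HopfAlgebra.antipode k (β.symm (HopfAlgebra.antipode k (x i)))) with hW
  have hUW : U * W = 1 := mul_eq_one_comm.1 hWU
  have bV : Function.Bijective (GYDProof.opV t X x σ.toLinearMap) :=
    GYDProof.bij_of_left_inv _ _ (GYDProof.opV_left_inv Si hS1 hS2 hc σ)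
  have bUl : Function.Bijective (LinearMap.mulLeft k U) :=
    GYDProof.bij_of_left_inv _ (LinearMap.mulLeft k W) (by
      ext1 b; simp [← mul_assoc, hWU])
  have bUr : Function.Bijective (LinearMap.mulRight k U) :=
    GYDProof.bij_of_left_inv _ (LinearMap.mulRight k W) (by
      ext1 b; simp [mul_assoc, hUW])
  have bVU : Function.Bijective
      (GYDProof.opV t X x σ.toLinearMap ∘ₗ LinearMap.mulLeft k U) := by
    rw [LinearMap.coe_comp]
    exact bV.comp bUl
  have bQ : Function.Bijective (GYDProof.opQ t X x actE) :=
    GYDProof.bij_of_left_inv _ _ (GYDProof.opQ_left_inv Si hS1 hS2 hc actE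
      (GYDProof.act_one σ actE hact) (GYDProof.act_mul σ actE hact))
  have bQ1 : Function.Bijective (GYDProof.opQ t X x (GYDProof.lact σ.toLinearMap)) :=
    GYDProof.bij_of_left_inv _ _ (GYDProof.opQ_left_inv Si hS1 hS2 hc _
      (by simp) (by simp [mul_assoc]))
  have bP : Function.Bijective
      (GYDProof.opP t X x (GYDProof.lact (σ.toLinearMap ∘ₗ HopfAlgebra.antipode k))) :=
    GYDProof.bij_of_left_inv _ _ (GYDProof.opP_left_inv hc σ)
  have bL : ∀ f : Module.End k M →ₗ[k] Module.End k M, Function.Bijective f →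
      Function.Bijective (LinearMap.lTensor (Module.End k M) f) := fun f hf =>
    (LinearEquiv.lTensor (Module.End k M) (LinearEquiv.ofBijective f hf)).bijective
  have bR : ∀ f : Module.End k M →ₗ[k] Module.End k M, Function.Bijective f →
      Function.Bijective (LinearMap.rTensor (Module.End k M) f) := fun f hf =>
    (LinearEquiv.rTensor (Module.End k M) (LinearEquiv.ofBijective f hf)).bijective
  obtain ⟨t', e, he⟩ := GYDProof.reindex (t ×ˢ t)
  have hco' : ∀ c, coactE c = ∑ n ∈ t',
      (X (e n).1 * c * X (e n).2) ⊗ₜ[k] (Si (x (e n).2) * x (e n).1) := by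
    intro c
    rw [he _ (fun n : ℕ × ℕ => (X n.1 * c * X n.2) ⊗ₜ[k] (Si (x n.2) * x n.1)),
      Finset.sum_product, hco]
  constructor
  · have hF : FF = GYDProof.opΛ k ∘ₗ LinearMap.lTensor _
        (GYDProof.opV t X x σ.toLinearMap ∘ₗ LinearMap.mulLeft k U) ∘ₗ
        GYDProof.opQ t X x actE := by
      refine TensorProduct.ext' fun a b => LinearMap.ext fun c => ?_
      rw [hFF a b c t' _ _ (hco' c), he _ (fun n : ℕ × ℕ => a * (X n.1 * c * X n.2) *
        actE (Si (x n.2) * x n.1) b), Finset.sum_product]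
      exact GYDProof.F_formula σ actE hact Si hS1 hS2 hc a b c
    rw [hF]
    exact GYDProof.opΛ_bij.comp ((bL _ bVU).comp bQ)
  · have hG : GG = (MulOpposite.opLinearEquiv k).toLinearMap ∘ₗ GYDProof.opΛ k ∘ₗ
        LinearMap.rTensor _ (GYDProof.opV t X x σ.toLinearMap) ∘ₗ
        GYDProof.opP t X x (GYDProof.lact (σ.toLinearMap ∘ₗ HopfAlgebra.antipode k)) ∘ₗ
        LinearMap.rTensor _ (LinearMap.mulRight k U) ∘ₗ
        GYDProof.opQ t X x (GYDProof.lact σ.toLinearMap) := by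
      refine TensorProduct.ext' fun a b => MulOpposite.unop_injective (LinearMap.ext fun c => ?_)
      rw [hGG a b c t' _ _ (hco' a), he _ (fun n : ℕ × ℕ => (X n.1 * a * X n.2) *
        actE (Si (x n.2) * x n.1) c * b), Finset.sum_product]
      exact GYDProof.G_formula σ actE hact Si hS1 hS2 hc a b c
    rw [hG]
    exact (MulOpposite.opLinearEquiv k).bijective.comp (GYDProof.opΛ_bij.comp
      ((bR _ bV).comp (bP.comp ((bR _ bUr).comp bQ1))))

end
end
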